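/- arXiv:0909.4258 — 4 statements merged into one kernel-verified Lean document; each statement's English description precedes it below -/
import Mathlib

section
/- Assume P ∈ C²(ℝⁿ,ℝⁿ), Q ∈ C¹(ℝⁿ×[0,1],ℝⁿ), v₀ ∈ ℝⁿ satisfies P(v₀)=0, and Π : ℝⁿ → ℝⁿ is a linear projector with ΠP'(v₀) = 0 and ΠQ(v₀,0) = 0. Define Ψ(w,ε) for ε > 0 by Ψ(w,ε) = (1/ε)(Φ(v₀+εw,ε) − ΠΦ(v₀+εw,ε)) + (1/ε²)ΠΦ(v₀+εw,ε) where Φ(v,ε) = P(v)+εQ(v,ε), and define Ψ(w,0) = (1/2)ΠP''(v₀)[w,w] + ΠQ'_v(v₀,0)w + ΠQ'_ε(v₀,0) + (I−Π)P'(v₀)w + (I−Π)Q(v₀,0). Then Ψ is continuous on ℝⁿ×[0,1]; in particular Ψ(w,ε) → Ψ(w₀,0) as (w,ε) → (w₀,0) with ε > 0, for every w₀ ∈ ℝⁿ. -/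
open Set Filter Topology

/-!
Write `x = v₀ + εw`. Away from `ε = 0` continuity is clear, so everything rests on the limit as
`ε → 0`. Since `P(v₀) = 0`, `ε⁻¹Φ(x, ε) → P'(v₀)w + Q(v₀, 0)` by differentiability of `P`.
After applying `Π`, the terms `P(v₀)`, `εP'(v₀)w` and `εQ(v₀, 0)` disappear, so what is left of
`Φ` is of order `ε²`: its coefficient combines the second-order Taylor term of `P` with the
first-order term of `Q`. No uniformity in `w` has to be tracked, nor continuity of the limit map
checked: limits along arbitrary `w → w₀`, `ε → 0⁺` already force continuity up to the boundary,
because the target space is regular.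
-/

section Limits

variable {X Y : Type*} [TopologicalSpace X] [TopologicalSpace Y]

theorem continuousOn_of_tendsto_nhdsWithin [T3Space Y] {f : X → Y} {A B : Set X}
    (hB : B ⊆ closure A) (hf : ∀ x ∈ B, Tendsto f (𝓝[A] x) (𝓝 (f x))) : ContinuousOn f B :=
  (continuousOn_extendFrom hB fun x hx => ⟨f x, hf x hx⟩).congr
    fun x hx => (extendFrom_eq (hB hx) (hf x hx)).symm

end Limits

section FirstOrder

variable {𝕜 E F : Type*} [NontriviallyNormedField 𝕜] [NormedAddCommGroup E] [NormedSpace 𝕜 E]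
  [NormedAddCommGroup F] [NormedSpace 𝕜 F]

theorem tendsto_inv_smul_sub_of_hasFDerivAt {f : E → F} {f' : E →L[𝕜] F} {x w₀ : E} {α : Type*}
    {l : Filter α} {w : α → E} {ε : α → 𝕜} (hf : HasFDerivAt f f' x)
    (hw : Tendsto w l (𝓝 w₀)) (hε : Tendsto ε l (𝓝[≠] 0)) :
    Tendsto (fun a => (ε a)⁻¹ • (f (x + ε a • w a) - f x)) l (𝓝 (f' w₀)) := by
  have hε0 : ∀ᶠ a in l, ε a ≠ 0 := hε.eventually self_mem_nhdsWithin
  have hstep : Tendsto (fun a => ε a • w a) l (𝓝 0) := by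
    simpa using (hε.mono_right nhdsWithin_le_nhds).smul hw
  refine hf.hasFDerivWithinAt.lim (s := univ) hstep (by simp) (hw.congr' ?_)
  filter_upwards [hε0] with a ha using (inv_smul_smul₀ ha _).symm

theorem fderiv_uncurry_apply {f : E → 𝕜 → F} {x : E} {t : 𝕜}
    (hf : DifferentiableAt 𝕜 (Function.uncurry f) (x, t)) (v : E) (s : 𝕜) :
    fderiv 𝕜 (Function.uncurry f) (x, t) (v, s) =
      fderiv 𝕜 (fun y => f y t) x v + s • deriv (f x) t := by
  have hleft : fderiv 𝕜 (fun y => f y t) x v = fderiv 𝕜 (Function.uncurry f) (x, t) (v, 0) :=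
    congrArg (· v) (hf.hasFDerivAt.comp x (hasFDerivAt_prodMk_left (𝕜 := 𝕜) x t)).fderiv
  have hright : deriv (f x) t = fderiv 𝕜 (Function.uncurry f) (x, t) (0, 1) :=
    (hf.hasFDerivAt.comp t (hasFDerivAt_prodMk_right (𝕜 := 𝕜) x t)).hasDerivAt.deriv
  rw [hleft, hright, ← map_smul, ← map_add]
  simp

end FirstOrder

section Taylor

variable {E F : Type*} [NormedAddCommGroup E] [NormedSpace ℝ E]
  [NormedAddCommGroup F] [NormedSpace ℝ F]

theorem hasFDerivAt_half_smul_apply_self {B : E →L[ℝ] E →L[ℝ] F} (hB : ∀ v w, B v w = B w v)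
    (h : E) : HasFDerivAt (fun h => (1 / 2 : ℝ) • B h h) (B h) h := by
  refine ((B.hasFDerivAt.clm_apply (hasFDerivAt_id h)).const_smul (1 / 2 : ℝ)).congr_fderiv ?_
  ext k
  simp only [id_eq, ContinuousLinearMap.comp_id, add_apply, smul_apply,
    ContinuousLinearMap.flip_apply, hB k h]
  module

theorem isLittleO_taylor_two {f : E → F} {f' : E → E →L[ℝ] F} {f'' : E →L[ℝ] E →L[ℝ] F} {x : E}
    (hf : ∀ᶠ y in 𝓝 x, HasFDerivAt f (f' y) y) (hf' : HasFDerivAt f' f'' x) :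
    (fun y => f y - f x - f' x (y - x) - (1 / 2 : ℝ) • f'' (y - x) (y - x))
      =o[𝓝 x] fun y => ‖y - x‖ ^ 2 := by
  have hsymm := second_derivative_symmetric_of_eventually hf hf'
  obtain ⟨δ, hδ, hball⟩ := Metric.eventually_nhds_iff_ball.1 hf
  have hderiv : ∀ y ∈ Metric.ball x δ,
      HasFDerivWithinAt
        (fun y => f y - f x - f' x (y - x) - (1 / 2 : ℝ) • f'' (y - x) (y - x))
        (f' y - f' x - f'' (y - x)) (Metric.ball x δ) y := fun y hy => by
    have hsub : HasFDerivAt (fun y => y - x) (ContinuousLinearMap.id ℝ E) y :=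
      (hasFDerivAt_id y).sub_const x
    have hlin := (f' x).hasFDerivAt.comp y hsub
    have hquad := (hasFDerivAt_half_smul_apply_self hsymm (y - x)).comp y hsub
    exact (((hball y hy).sub_const (f x)).sub hlin).sub hquad |>.hasFDerivWithinAt
  have hremainder := (convex_ball x δ).isLittleO_pow_succ (n := 1) (Metric.mem_ball_self hδ) hderiv
  rw [Metric.isOpen_ball.nhdsWithin_eq (Metric.mem_ball_self hδ)] at hremainder
  simpa using hremainder (by simpa using hf'.isLittleO.norm_right)

variable {α : Type*} {l : Filter α} {w : α → E} {ε : α → ℝ} {w₀ : E}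

theorem tendsto_inv_sq_smul_taylor {f : E → F} {f' : E → E →L[ℝ] F} {f'' : E →L[ℝ] E →L[ℝ] F}
    {x : E} (hf : ∀ᶠ y in 𝓝 x, HasFDerivAt f (f' y) y) (hf' : HasFDerivAt f' f'' x)
    (hw : Tendsto w l (𝓝 w₀)) (hε : Tendsto ε l (𝓝[≠] 0)) :
    Tendsto (fun a => (ε a ^ 2)⁻¹ • (f (x + ε a • w a) - f x - ε a • f' x (w a))) l
      (𝓝 ((1 / 2 : ℝ) • f'' w₀ w₀)) := by
  have hε0 : ∀ᶠ a in l, ε a ≠ 0 := hε.eventually self_mem_nhdsWithin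
  have hstep : Tendsto (fun a => x + ε a • w a) l (𝓝 x) := by
    simpa using ((hε.mono_right nhdsWithin_le_nhds).smul hw).const_add x
  have hO : (fun a => ‖ε a • w a‖ ^ 2) =O[l] fun a => ε a ^ 2 := by
    simpa using (((Asymptotics.isBigO_refl ε l).smul (hw.isBigO_one ℝ)).norm_left.pow 2)
  have hremainder := ((isLittleO_taylor_two hf hf').comp_tendsto hstep).trans_isBigO
    (by simpa [Function.comp_def] using hO) |>.tendsto_inv_smul_nhds_zero
  have hquad : Tendsto (fun a => (1 / 2 : ℝ) • f'' (w a) (w a)) l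
      (𝓝 ((1 / 2 : ℝ) • f'' w₀ w₀)) :=
    ((by fun_prop : Continuous fun w => (1 / 2 : ℝ) • f'' w w).tendsto w₀).comp hw
  refine (zero_add ((1 / 2 : ℝ) • f'' w₀ w₀) ▸ hremainder.add hquad).congr' ?_
  filter_upwards [hε0] with a ha
  simp only [Function.comp_apply, add_sub_cancel_left, map_smul, smul_apply]
  match_scalars <;> field_simp
  ring

end Taylor

section Rescaling

variable {E F : Type*} [NormedAddCommGroup E] [NormedSpace ℝ E]
  [NormedAddCommGroup F] [NormedSpace ℝ F]

/-- The perturbed map `Φ(v, ε) = P(v) + εQ(v, ε)`. -/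
def perturbedMap (P : E → F) (Q : E → ℝ → F) (v : E) (ε : ℝ) : F :=
  P v + ε • Q v ε

/-- The rescaling `ε⁻¹(I − Π)Φ(v₀ + εw, ε) + ε⁻²ΠΦ(v₀ + εw, ε)` of a family `Φ` around `v₀`; its
values at `ε = 0` are junk. -/
noncomputable def rescaledMap (Φ : E → ℝ → F) (Pr : F →L[ℝ] F) (v₀ w : E) (ε : ℝ) : F :=
  ε⁻¹ • (Φ (v₀ + ε • w) ε - Pr (Φ (v₀ + ε • w) ε)) + (ε ^ 2)⁻¹ • Pr (Φ (v₀ + ε • w) ε)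

/-- The limit of the rescaled perturbed map as `ε → 0`, that is `Ψ(·, 0)`. -/
noncomputable def rescaledLimit (P : E → F) (Q : E → ℝ → F) (Pr : F →L[ℝ] F) (v₀ w : E) : F :=
  (1 / 2 : ℝ) • Pr (fderiv ℝ (fderiv ℝ P) v₀ w w)
    + Pr (fderiv ℝ (fun v => Q v 0) v₀ w)
    + Pr (deriv (fun e => Q v₀ e) 0)
    + (fderiv ℝ P v₀ w - Pr (fderiv ℝ P v₀ w))
    + (Q v₀ 0 - Pr (Q v₀ 0))

variable {P : E → F} {Q : E → ℝ → F} {Pr : F →L[ℝ] F} {v₀ w₀ : E}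

theorem continuousAt_rescaledMap {Φ : E → ℝ → F} {ε : ℝ}
    (hΦ : ContinuousAt (Function.uncurry Φ) (v₀ + ε • w₀, ε)) (hε : ε ≠ 0) :
    ContinuousAt (Function.uncurry (rescaledMap Φ Pr v₀)) (w₀, ε) := by
  have hcomp : ContinuousAt (fun p : E × ℝ => Φ (v₀ + p.2 • p.1) p.2) (w₀, ε) :=
    ContinuousAt.comp (x := (w₀, ε)) (f := fun p : E × ℝ => (v₀ + p.2 • p.1, p.2)) hΦ (by fun_prop)
  have hPrcomp := Pr.continuous.continuousAt.comp hcomp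
  exact ((continuousAt_snd.inv₀ hε).smul (hcomp.sub hPrcomp)).add
    (((continuousAt_snd.pow 2).inv₀ (pow_ne_zero 2 hε)).smul hPrcomp)

section Tendsto

variable {α : Type*} {l : Filter α} {w : α → E} {ε : α → ℝ}

theorem tendsto_inv_smul_perturbedMap (hP : DifferentiableAt ℝ P v₀)
    (hQ : ContinuousAt (Function.uncurry Q) (v₀, 0)) (hP₀ : P v₀ = 0)
    (hw : Tendsto w l (𝓝 w₀)) (hε : Tendsto ε l (𝓝[≠] 0)) :
    Tendsto (fun a => (ε a)⁻¹ • perturbedMap P Q (v₀ + ε a • w a) (ε a)) l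
      (𝓝 (fderiv ℝ P v₀ w₀ + Q v₀ 0)) := by
  have hε0 : ∀ᶠ a in l, ε a ≠ 0 := hε.eventually self_mem_nhdsWithin
  have hbase : Tendsto (fun a => (v₀ + ε a • w a, ε a)) l (𝓝 (v₀, 0)) := by
    have hε₀ : Tendsto ε l (𝓝 0) := hε.mono_right nhdsWithin_le_nhds
    simpa using ((hε₀.smul hw).const_add v₀).prodMk_nhds hε₀
  have hPfirst := tendsto_inv_smul_sub_of_hasFDerivAt hP.hasFDerivAt hw hε
  refine (hPfirst.add (hQ.tendsto.comp hbase)).congr' ?_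
  filter_upwards [hε0] with a ha
  simp [perturbedMap, hP₀, smul_add, inv_smul_smul₀ ha]

theorem tendsto_inv_sq_smul_map_perturbedMap
    (hP : ∀ᶠ v in 𝓝 v₀, DifferentiableAt ℝ P v) (hP' : DifferentiableAt ℝ (fderiv ℝ P) v₀)
    (hQ : DifferentiableAt ℝ (Function.uncurry Q) (v₀, 0))
    (hPrP : Pr (P v₀) = 0) (hPrP' : ∀ x, Pr (fderiv ℝ P v₀ x) = 0) (hPrQ : Pr (Q v₀ 0) = 0)
    (hw : Tendsto w l (𝓝 w₀)) (hε : Tendsto ε l (𝓝[≠] 0)) :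
    Tendsto (fun a => (ε a ^ 2)⁻¹ • Pr (perturbedMap P Q (v₀ + ε a • w a) (ε a))) l
      (𝓝 (Pr ((1 / 2 : ℝ) • fderiv ℝ (fderiv ℝ P) v₀ w₀ w₀
        + fderiv ℝ (Function.uncurry Q) (v₀, 0) (w₀, 1)))) := by
  have hε0 : ∀ᶠ a in l, ε a ≠ 0 := hε.eventually self_mem_nhdsWithin
  have hPsecond := tendsto_inv_sq_smul_taylor (hP.mono fun v hv => hv.hasFDerivAt)
    hP'.hasFDerivAt hw hε
  have hQfirst := tendsto_inv_smul_sub_of_hasFDerivAt hQ.hasFDerivAt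
    (hw.prodMk_nhds (tendsto_const_nhds (x := (1 : ℝ)))) hε
  refine ((Pr.continuous.tendsto _).comp (hPsecond.add hQfirst)).congr' ?_
  filter_upwards [hε0] with a ha
  simp only [Function.comp_apply, perturbedMap, Function.uncurry, Prod.smul_mk, Prod.mk_add_mk,
    smul_eq_mul, mul_one, zero_add, map_add, map_sub, map_smul, hPrP, hPrP', hPrQ]
  match_scalars <;> field_simp

theorem tendsto_rescaledMap
    (hP : ∀ᶠ v in 𝓝 v₀, DifferentiableAt ℝ P v) (hP' : DifferentiableAt ℝ (fderiv ℝ P) v₀)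
    (hQ : DifferentiableAt ℝ (Function.uncurry Q) (v₀, 0))
    (hP₀ : P v₀ = 0) (hPrP' : ∀ x, Pr (fderiv ℝ P v₀ x) = 0) (hPrQ : Pr (Q v₀ 0) = 0)
    (hw : Tendsto w l (𝓝 w₀)) (hε : Tendsto ε l (𝓝[≠] 0)) :
    Tendsto (fun a => rescaledMap (perturbedMap P Q) Pr v₀ (w a) (ε a)) l
      (𝓝 (rescaledLimit P Q Pr v₀ w₀)) := by
  have hfirst := tendsto_inv_smul_perturbedMap hP.self_of_nhds hQ.continuousAt hP₀ hw hε
  have hsecond := tendsto_inv_sq_smul_map_perturbedMap hP hP' hQ (by simp [hP₀]) hPrP' hPrQ hw hε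
  have hlim := (hfirst.sub ((Pr.continuous.tendsto _).comp hfirst)).add hsecond
  have hvalue : rescaledLimit P Q Pr v₀ w₀ =
      (fderiv ℝ P v₀ w₀ + Q v₀ 0 - Pr (fderiv ℝ P v₀ w₀ + Q v₀ 0))
        + Pr ((1 / 2 : ℝ) • fderiv ℝ (fderiv ℝ P) v₀ w₀ w₀
          + fderiv ℝ (Function.uncurry Q) (v₀, 0) (w₀, 1)) := by
    simp only [rescaledLimit, fderiv_uncurry_apply hQ, map_add, map_smul, one_smul]
    abel
  rw [hvalue]
  simpa only [rescaledMap, Function.comp_apply, map_smul, smul_sub] using hlim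

end Tendsto

end Rescaling

theorem stmt_1_general {E F : Type*} [NormedAddCommGroup E] [NormedSpace ℝ E]
    [NormedAddCommGroup F] [NormedSpace ℝ F] {P : E → F} {Q : E → ℝ → F} {Pr : F →L[ℝ] F} {v₀ : E}
    (hPc : Continuous P) (hP : ∀ᶠ v in 𝓝 v₀, DifferentiableAt ℝ P v)
    (hP' : DifferentiableAt ℝ (fderiv ℝ P) v₀)
    (hQc : Continuous (Function.uncurry Q)) (hQ : DifferentiableAt ℝ (Function.uncurry Q) (v₀, 0))
    (hv₀ : P v₀ = 0) (hPrP' : ∀ x, Pr (fderiv ℝ P v₀ x) = 0) (hPrQ : Pr (Q v₀ 0) = 0)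
    {Ψ : E → ℝ → F}
    (hΨpos : ∀ w, ∀ ε > (0 : ℝ), Ψ w ε = rescaledMap (perturbedMap P Q) Pr v₀ w ε)
    (hΨ0 : ∀ w, Ψ w 0 = rescaledLimit P Q Pr v₀ w) :
    ContinuousOn (Function.uncurry Ψ) (univ ×ˢ Ici (0 : ℝ)) ∧
      ∀ w₀, Tendsto (Function.uncurry Ψ) (𝓝 w₀ ×ˢ 𝓝[>] (0 : ℝ)) (𝓝 (Ψ w₀ 0)) := by
  have hlim (w₀ : E) : Tendsto (Function.uncurry Ψ) (𝓝 w₀ ×ˢ 𝓝[>] (0 : ℝ)) (𝓝 (Ψ w₀ 0)) := by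
    rw [hΨ0]
    refine (tendsto_rescaledMap hP hP' hQ hv₀ hPrP' hPrQ tendsto_fst
      (tendsto_snd.mono_right (nhdsGT_le_nhdsNE 0))).congr' ?_
    filter_upwards [tendsto_snd.eventually self_mem_nhdsWithin] with p hp using
      (hΨpos p.1 p.2 hp).symm
  refine ⟨continuousOn_of_tendsto_nhdsWithin (A := univ ×ˢ Ioi 0) (by simp [closure_prod_eq]) ?_,
    hlim⟩
  rintro ⟨w₀, ε⟩ ⟨-, hε⟩
  rcases (mem_Ici.1 hε).eq_or_lt with rfl | hε
  · simpa only [nhdsWithin_prod_eq, nhdsWithin_univ, Function.uncurry_apply_pair] using hlim w₀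
  · have hΦ : Continuous (Function.uncurry (perturbedMap P Q)) := by
      unfold perturbedMap Function.uncurry
      fun_prop
    have hcont := continuousAt_rescaledMap (Pr := Pr) (v₀ := v₀) (w₀ := w₀) hΦ.continuousAt hε.ne'
    refine (hcont.congr ?_).continuousWithinAt
    filter_upwards [continuousAt_snd.eventually (lt_mem_nhds hε)] with p hp using
      (hΨpos p.1 p.2 hp).symm

/-- first assertion of Lemma 1: with `ΠP'(v₀) = 0`, `ΠQ(v₀,0) = 0`, the map
`Ψ` (defined by the scaled formula for `ε > 0` and by
`Ψ(w,0) = ½ΠP''(v₀)[w,w] + ΠQ'_v(v₀,0)w + ΠQ'_ε(v₀,0) + (I−Π)P'(v₀)w + (I−Π)Q(v₀,0)`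
at `ε = 0`) is continuous on `ℝⁿ × [0,1]`; in particular
`Ψ(w,ε) → Ψ(w₀,0)` as `(w,ε) → (w₀,0)` with `ε > 0`. -/
theorem stmt_1 {n : ℕ}
    (P : EuclideanSpace ℝ (Fin n) → EuclideanSpace ℝ (Fin n))
    (Q : EuclideanSpace ℝ (Fin n) → ℝ → EuclideanSpace ℝ (Fin n))
    (hP : ContDiff ℝ 2 P)
    (hQ : ContDiff ℝ 1 fun p : EuclideanSpace ℝ (Fin n) × ℝ => Q p.1 p.2)
    (v₀ : EuclideanSpace ℝ (Fin n)) (hv₀ : P v₀ = 0)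
    (Pr : EuclideanSpace ℝ (Fin n) →L[ℝ] EuclideanSpace ℝ (Fin n))
    (hPr : ∀ x, Pr (Pr x) = Pr x)
    (hPrP' : ∀ x, Pr (fderiv ℝ P v₀ x) = 0)
    (hPrQ : Pr (Q v₀ 0) = 0)
    (Ψ : EuclideanSpace ℝ (Fin n) → ℝ → EuclideanSpace ℝ (Fin n))
    (hΨpos : ∀ w : EuclideanSpace ℝ (Fin n), ∀ ε > (0:ℝ), Ψ w ε =
      ε⁻¹ • ((P (v₀ + ε • w) + ε • Q (v₀ + ε • w) ε)
          - Pr (P (v₀ + ε • w) + ε • Q (v₀ + ε • w) ε)) +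
        (ε ^ 2)⁻¹ • Pr (P (v₀ + ε • w) + ε • Q (v₀ + ε • w) ε))
    (hΨ0 : ∀ w : EuclideanSpace ℝ (Fin n), Ψ w 0 =
      (1/2 : ℝ) • Pr (fderiv ℝ (fderiv ℝ P) v₀ w w)
        + Pr (fderiv ℝ (fun v => Q v 0) v₀ w)
        + Pr (deriv (fun e => Q v₀ e) 0)
        + (fderiv ℝ P v₀ w - Pr (fderiv ℝ P v₀ w))
        + (Q v₀ 0 - Pr (Q v₀ 0))) :
    ContinuousOn (fun p : EuclideanSpace ℝ (Fin n) × ℝ => Ψ p.1 p.2)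
        (univ ×ˢ Icc (0:ℝ) 1) ∧
      ∀ w₀ : EuclideanSpace ℝ (Fin n),
        Tendsto (fun p : EuclideanSpace ℝ (Fin n) × ℝ => Ψ p.1 p.2)
          ((𝓝 w₀) ×ˢ (𝓝[>] (0:ℝ))) (𝓝 (Ψ w₀ 0)) := by
  have hP1 : ContDiff ℝ 1 (fderiv ℝ P) := hP.fderiv_right (by norm_num)
  obtain ⟨hcont, hlim⟩ := stmt_1_general hP.continuous
    (.of_forall fun v => hP.differentiable two_ne_zero v) (hP1.differentiable one_ne_zero v₀)
    hQ.continuous (hQ.differentiable one_ne_zero _) hv₀ hPrP' hPrQ hΨpos hΨ0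
  exact ⟨hcont.mono (prod_mono_right Icc_subset_Ici_self), hlim⟩
end

section
/- Assume P ∈ C²(ℝⁿ,ℝⁿ), Q ∈ C¹(ℝⁿ×[0,1],ℝⁿ), v₀ ∈ ℝⁿ with P(v₀)=0 and P'(v₀) singular. Let Π : ℝⁿ → ℝⁿ be a linear projector whose image and kernel are invariant under P'(v₀), with ΠP'(v₀) = 0 and P'(v₀) invertible as a map of (I−Π)ℝⁿ to itself. Assume ΠQ(v₀,0) = 0, ΠP''(v₀)[Πr, Πs] = 0 for all r,s ∈ ℝⁿ, and that the linear map −ΠP''(v₀)[(I−Π)(P'(v₀)|_{(I−Π)ℝⁿ})⁻¹Q(v₀,0), ·] + ΠQ'_v(v₀,0) is invertible on Πℝⁿ. Then there exists a unique w₀ ∈ ℝⁿ such that Ψ(w₀,0) = 0, where Ψ(w,0) := (1/2)ΠP''(v₀)[w,w] + ΠQ'_v(v₀,0)w + ΠQ'_ε(v₀,0) + (I−Π)P'(v₀)w + (I−Π)Q(v₀,0); moreover the linear map Ψ'_w(w₀,0) := ΠP''(v₀)[w₀,·] + ΠQ'_v(v₀,0) + (I−Π)P'(v₀) is invertible. 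-/
open Set Filter Topology

/-!
The hypotheses make `Π` the projection onto `ker P'(v₀)` along `range P'(v₀)`. Write `A = P'(v₀)`,
`B = P''(v₀)` and let `A u = Q(v₀,0)`. The `(I−Π)`-part of `Ψ(w,0) = 0` reads `A w = -A u`, that is
`w ∈ -u + ker A`. Since `Π B` vanishes on `ker A × ker A`, the map `Ψ(·,0)` is affine on this
translate, with linear part `Ψ'_w(-u,0)`. Relative to `ker A ⊕ range A` this linear part is block
triangular with invertible diagonal blocks, and `Ψ'_w(w₀,0)` has the same diagonal blocks for every
`w₀ ∈ -u + ker A`.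
-/

open LinearMap (IsProj)

section Projection

variable {R E : Type*} [Ring R] [AddCommGroup E] [Module R E] {A π : E →ₗ[R] E}

theorem isProj_ker_and_ker_eq_range (hπ : ∀ x, π (π x) = π x) (hAπ : ∀ x, A (π x) ∈ Set.range π)
    (hπA : ∀ x, π (A x) = 0) (hA : ∀ y, π y = 0 → ∃! u, π u = 0 ∧ A u = y) :
    IsProj A.ker π ∧ π.ker = A.range := by
  have comp_eq_zero (x : E) : A (π x) = 0 := by
    obtain ⟨y, hy⟩ := hAπ x
    rw [← hy, ← hπ y, hy, hπA]
  refine ⟨⟨comp_eq_zero, fun x (hx : A x = 0) => ?_⟩, le_antisymm (fun y hy => ?_) ?_⟩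
  · have sub_eq_zero_of_ker : x - π x = 0 :=
      (hA 0 (map_zero π)).unique ⟨by simp [hπ], by simp [hx, comp_eq_zero]⟩ (by simp)
    exact (sub_eq_zero.mp sub_eq_zero_of_ker).symm
  · obtain ⟨u, -, hu⟩ := (hA y hy).exists
    exact ⟨u, hu⟩
  · rintro _ ⟨x, rfl⟩
    exact hπA x

theorem proj_map_eq_zero (hker : π.ker = A.range) (x : E) : π (A x) = 0 :=
  hker.ge ⟨x, rfl⟩

theorem proj_proj (hπ : IsProj A.ker π) (x : E) : π (π x) = π x :=
  hπ.map_id _ (hπ.map_mem x)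

theorem proj_add_map_eq_iff (hπ : IsProj A.ker π) (hker : π.ker = A.range) (a x y : E) :
    π a + A x = y ↔ π a = π y ∧ A x = y - π y := by
  constructor
  · rintro rfl
    simp [proj_map_eq_zero hker, proj_proj hπ]
  · rintro ⟨hrange, hcompl⟩
    rw [hrange, hcompl, add_sub_cancel]

theorem bijective_proj_comp_add (hπ : IsProj A.ker π) (hker : π.ker = A.range) {T : E →ₗ[R] E}
    (hT : ∀ y, π y = y → ∃! h, π h = h ∧ π (T h) = y) :
    Function.Bijective (π ∘ₗ T + A) := by
  constructor
  · refine (injective_iff_map_eq_zero _).mpr fun h (hh : π (T h) + A h = 0) => ?_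
    obtain ⟨hTh, hAh⟩ := (proj_add_map_eq_iff hπ hker _ _ _).mp hh
    have hfix : π h = h := hπ.map_id h (by simpa using hAh)
    exact (hT 0 (map_zero π)).unique ⟨hfix, by simpa using hTh⟩ (by simp)
  · intro y
    obtain ⟨k, hk⟩ : y - π y ∈ A.range := hker.le (by simp [proj_proj hπ])
    obtain ⟨h, hfix, hh⟩ := (hT (π (y - T k)) (proj_proj hπ _)).exists
    refine ⟨h + k, (proj_add_map_eq_iff hπ hker _ _ _).mpr ⟨?_, ?_⟩⟩
    · rw [map_add, map_add, hh, map_sub, sub_add_cancel]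
    · rw [map_add, LinearMap.mem_ker.mp (hπ.mem_iff_map_id.mpr hfix), zero_add, hk]

end Projection

section ReducedMap

variable {K E : Type*} [Field K] [AddCommGroup E] [Module K E]

/-- The reduced map `Ψ(·,0)` of the bifurcation problem, with `π = Π`, `A = P'(v₀)`,
`C = Q'_v(v₀,0)`, `B = P''(v₀)`, `q = Q(v₀,0)` and `g = Q'_ε(v₀,0)`. -/
def reducedMap (π A C : E →ₗ[K] E) (B : E →ₗ[K] E →ₗ[K] E) (q g w : E) : E :=
  (1/2 : K) • π (B w w) + π (C w) + π g + (A w - π (A w)) + (q - π q)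

/-- The derivative `Ψ'_w(w,0)` of `reducedMap` at `w`, when `B` is symmetric. -/
def reducedDeriv (π A C : E →ₗ[K] E) (B : E →ₗ[K] E →ₗ[K] E) (w : E) : E →ₗ[K] E :=
  π ∘ₗ B w + π ∘ₗ C + (A - π ∘ₗ A)

variable {π A C : E →ₗ[K] E} {B : E →ₗ[K] E →ₗ[K] E} {q u w : E}

theorem map_eq_neg_of_reducedMap_eq_zero (hπ : IsProj A.ker π) (hker : π.ker = A.range) {g : E}
    (hw : reducedMap π A C B (A u) g w = 0) : A w = -A u := by
  have split : π ((1/2 : K) • B w w + C w + g) + A (w + u) = 0 := by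
    rw [← hw]
    simp only [reducedMap, proj_map_eq_zero hker, map_add, map_smul]
    abel
  have compl_eq_zero : A (w + u) = 0 := by
    simpa using ((proj_add_map_eq_iff hπ hker _ _ _).mp split).2
  exact eq_neg_of_add_eq_zero_left (by rwa [← map_add])

theorem reducedDeriv_eq_proj_comp_add (hker : π.ker = A.range) (w : E) :
    reducedDeriv π A C B w = π ∘ₗ (B w + C) + A := by
  rw [reducedDeriv, LinearMap.range_le_ker_iff.mp hker.ge, sub_zero, LinearMap.comp_add]

theorem bijective_reducedDeriv (hπ : IsProj A.ker π) (hker : π.ker = A.range)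
    (hB : ∀ r s, π (B (π r) (π s)) = 0)
    (hinv : ∀ y, π y = y → ∃! h, π h = h ∧ -π (B u h) + π (C h) = y) (hw : A w = -A u) :
    Function.Bijective (reducedDeriv π A C B w) := by
  have hfix : π (w + u) = w + u := hπ.map_id _ (by simp [hw])
  have block_eq {h : E} (hh : π h = h) : π ((B w + C) h) = -π (B u h) + π (C h) := by
    have hzero : π (B w h) + π (B u h) = 0 := by simpa [hfix, hh] using hB (w + u) h
    rw [LinearMap.add_apply, map_add, eq_neg_of_add_eq_zero_left hzero]
  rw [reducedDeriv_eq_proj_comp_add hker]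
  refine bijective_proj_comp_add hπ hker fun y hy => ?_
  exact (existsUnique_congr fun h => and_congr_right fun hh => by rw [block_eq hh]).mpr (hinv y hy)

variable [NeZero (2 : K)]

theorem reducedMap_eq_reducedDeriv_sub (hπ : IsProj A.ker π) (hker : π.ker = A.range)
    (hsymm : ∀ x y, B x y = B y x) (hB : ∀ r s, π (B (π r) (π s)) = 0) (g : E)
    (hw : A w = -A u) :
    reducedMap π A C B (A u) g w =
      reducedDeriv π A C B (-u) w - ((1/2 : K) • π (B u u) - π g - A u) := by
  have hfix : π (w + u) = w + u := hπ.map_id _ (by simp [hw])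
  have polarization : π (B w w) + (2 : K) • π (B u w) + π (B u u) = 0 := by
    rw [← hB (w + u) (w + u), hfix]
    simp only [map_add, LinearMap.add_apply, hsymm w u]
    module
  have half_smul_eq : (1/2 : K) • π (B w w) = -π (B u w) - (1/2 : K) • π (B u u) := by
    linear_combination (norm := skip) (1/2 : K) • polarization
    match_scalars <;> field_simp <;> ring
  simp only [reducedMap, half_smul_eq, reducedDeriv, LinearMap.add_apply, LinearMap.sub_apply,
    LinearMap.comp_apply, map_neg, LinearMap.neg_apply, proj_map_eq_zero hker]
  abel

theorem reducedMap_eq_zero_iff (hπ : IsProj A.ker π) (hker : π.ker = A.range)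
    (hsymm : ∀ x y, B x y = B y x) (hB : ∀ r s, π (B (π r) (π s)) = 0) (g w : E) :
    reducedMap π A C B (A u) g w = 0 ↔
      reducedDeriv π A C B (-u) w = (1/2 : K) • π (B u u) - π g - A u := by
  constructor
  · intro hw
    rwa [reducedMap_eq_reducedDeriv_sub hπ hker hsymm hB g
      (map_eq_neg_of_reducedMap_eq_zero hπ hker hw), sub_eq_zero] at hw
  · intro hw
    have compl_eq : A w = -A u := by
      have split := hw
      rw [reducedDeriv_eq_proj_comp_add hker] at split
      simpa [proj_map_eq_zero hker, proj_proj hπ] using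
        ((proj_add_map_eq_iff hπ hker _ _ _).mp split).2
    rw [reducedMap_eq_reducedDeriv_sub hπ hker hsymm hB g compl_eq, hw, sub_self]

theorem stmt_3_general (hπ : IsProj A.ker π) (hker : π.ker = A.range)
    (hsymm : ∀ x y, B x y = B y x) (hB : ∀ r s, π (B (π r) (π s)) = 0) (hu : A u = q)
    (hinv : ∀ y, π y = y → ∃! h, π h = h ∧ -π (B u h) + π (C h) = y) (g : E) :
    (∃! w, reducedMap π A C B q g w = 0) ∧
      ∀ w, reducedMap π A C B q g w = 0 → Function.Bijective (reducedDeriv π A C B w) := by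
  subst hu
  constructor
  · simp only [reducedMap_eq_zero_iff hπ hker hsymm hB]
    exact (bijective_reducedDeriv hπ hker hB hinv (map_neg A u)).existsUnique _
  · intro w hw
    exact bijective_reducedDeriv hπ hker hB hinv (map_eq_neg_of_reducedMap_eq_zero hπ hker hw)

end ReducedMap

/-- Theorem 1: under the stated projector, degeneracy and invertibility
hypotheses there is a unique `w₀` with `Ψ(w₀,0) = 0`, and the linear map
`Ψ'_w(w₀,0) = ΠP''(v₀)[w₀,·] + ΠQ'_v(v₀,0) + (I−Π)P'(v₀)` is invertible.
The vector `u₁ = (P'(v₀)|_{(I−Π)ℝⁿ})⁻¹ Q(v₀,0)` is characterized by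
`Π u₁ = 0 ∧ P'(v₀) u₁ = Q(v₀,0)` (note `ΠQ(v₀,0) = 0`). -/
theorem stmt_3 {n : ℕ}
    (P : EuclideanSpace ℝ (Fin n) → EuclideanSpace ℝ (Fin n))
    (Q : EuclideanSpace ℝ (Fin n) → ℝ → EuclideanSpace ℝ (Fin n))
    (hP : ContDiff ℝ 2 P)
    (hQ : ContDiff ℝ 1 fun p : EuclideanSpace ℝ (Fin n) × ℝ => Q p.1 p.2)
    (v₀ : EuclideanSpace ℝ (Fin n)) (hv₀ : P v₀ = 0)
    (hsing : ¬ Function.Bijective (fderiv ℝ P v₀))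
    (Pr : EuclideanSpace ℝ (Fin n) →L[ℝ] EuclideanSpace ℝ (Fin n))
    (hPr : ∀ x, Pr (Pr x) = Pr x)
    (hIm : ∀ x, fderiv ℝ P v₀ (Pr x) ∈ Set.range Pr)
    (hKer : ∀ x, Pr x = 0 → Pr (fderiv ℝ P v₀ x) = 0)
    (hPrP' : ∀ x, Pr (fderiv ℝ P v₀ x) = 0)
    (hinvKer : ∀ y : EuclideanSpace ℝ (Fin n), Pr y = 0 →
      ∃! u : EuclideanSpace ℝ (Fin n), Pr u = 0 ∧ fderiv ℝ P v₀ u = y)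
    (hPrQ : Pr (Q v₀ 0) = 0)
    (hPP : ∀ r s : EuclideanSpace ℝ (Fin n),
      Pr (fderiv ℝ (fderiv ℝ P) v₀ (Pr r) (Pr s)) = 0)
    (hINV : ∀ u₁ : EuclideanSpace ℝ (Fin n),
      Pr u₁ = 0 → fderiv ℝ P v₀ u₁ = Q v₀ 0 →
      ∀ y : EuclideanSpace ℝ (Fin n), Pr y = y →
        ∃! h : EuclideanSpace ℝ (Fin n), Pr h = h ∧
          -Pr (fderiv ℝ (fderiv ℝ P) v₀ u₁ h)
            + Pr (fderiv ℝ (fun v => Q v 0) v₀ h) = y) :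
    (∃! w₀ : EuclideanSpace ℝ (Fin n),
      (1/2 : ℝ) • Pr (fderiv ℝ (fderiv ℝ P) v₀ w₀ w₀)
        + Pr (fderiv ℝ (fun v => Q v 0) v₀ w₀)
        + Pr (deriv (fun e => Q v₀ e) 0)
        + (fderiv ℝ P v₀ w₀ - Pr (fderiv ℝ P v₀ w₀))
        + (Q v₀ 0 - Pr (Q v₀ 0)) = 0) ∧
    ∀ w₀ : EuclideanSpace ℝ (Fin n),
      (1/2 : ℝ) • Pr (fderiv ℝ (fderiv ℝ P) v₀ w₀ w₀)
        + Pr (fderiv ℝ (fun v => Q v 0) v₀ w₀)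
        + Pr (deriv (fun e => Q v₀ e) 0)
        + (fderiv ℝ P v₀ w₀ - Pr (fderiv ℝ P v₀ w₀))
        + (Q v₀ 0 - Pr (Q v₀ 0)) = 0 →
      Function.Bijective (fun h : EuclideanSpace ℝ (Fin n) =>
        Pr (fderiv ℝ (fderiv ℝ P) v₀ w₀ h)
          + Pr (fderiv ℝ (fun v => Q v 0) v₀ h)
          + (fderiv ℝ P v₀ h - Pr (fderiv ℝ P v₀ h))) := by
  have hsymm : IsSymmSndFDerivAt ℝ P v₀ := hP.contDiffAt.isSymmSndFDerivAt (by simp)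
  obtain ⟨hproj, hker⟩ := isProj_ker_and_ker_eq_range (A := (fderiv ℝ P v₀).toLinearMap)
    (π := Pr.toLinearMap) hPr hIm hPrP' hinvKer
  obtain ⟨u₁, hu₁, hAu₁⟩ := (hinvKer _ hPrQ).exists
  exact stmt_3_general (B := (fderiv ℝ (fderiv ℝ P) v₀).toLinearMap₁₂)
    (C := (fderiv ℝ (fun v => Q v 0) v₀).toLinearMap) hproj hker hsymm hPP hAu₁ (hINV u₁ hu₁ hAu₁) _
end

section
/- Assume all the hypotheses of Theorem 1 for P ∈ C²(ℝⁿ,ℝⁿ), Q ∈ C¹(ℝⁿ×[0,1],ℝⁿ), v₀ ∈ ℝⁿ and the projector Π, and in addition that 0 is a simple eigenvalue of P'(v₀) and that v₀ = x₀(θ₀), where θ ↦ x₀(θ) is a C² curve with P(x₀(θ)) = 0 for all θ and ẋ₀(θ₀) ≠ 0. Let w₀ be the unique zero of Ψ(·,0), let {w_ε} (ε > 0 small) be the family of zeros of Ψ(·,ε) converging to w₀ as ε→0, and for each small ε > 0 let λ_ε be an eigenvalue of Φ'_v(v₀+εw_ε, ε) (where Φ(v,ε)=P(v)+εQ(v,ε))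 such that λ_ε → 0 as ε → 0. Let λ_* ∈ ℝ be the real number defined by ΠP''(v₀)[w₀, ẋ₀(θ₀)] + ΠQ'_v(v₀,0)ẋ₀(θ₀) = λ_* ẋ₀(θ₀), i.e. the eigenvalue of the operator ΠP''(v₀)[w₀,·] + ΠQ'_v(v₀,0) restricted to the one-dimensional space Πℝⁿ spanned by ẋ₀(θ₀). Then λ_ε = ελ_* + o(ε) as ε → 0. -/
open Set Filter Topology Asymptotics

/-!
Near `ε = 0` the linearization is `M_ε = A + ε B + o(ε)` with `A = P'(v₀)` and
`B = P''(v₀) w₀ + Q'_v(v₀, 0)`. The operator `S = (A + Π)⁻¹` satisfies `S A = 1 - Π`, so an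
eigenvector `x_ε` of `M_ε` for a small eigenvalue `μ_ε` has `x_ε - Π x_ε = S A x_ε = o(x_ε)`: it
aligns with the range of `Π`. Since `Π A = 0`, applying `Π` to `M_ε x_ε = μ_ε x_ε` then leaves
`(μ_ε - ε λ_*) Π x_ε = o(ε) Π x_ε`.
-/

section SpectralProjector

variable {𝕜 E : Type*} [NontriviallyNormedField 𝕜] [NormedAddCommGroup E] [NormedSpace 𝕜 E]
  {A Pr : E →L[𝕜] E}

theorem mul_eq_zero_of_apply_mem_range (hPr : IsIdempotentElem Pr) (hPrA : Pr * A = 0)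
    (hrange : ∀ x, A (Pr x) ∈ range Pr) : A * Pr = 0 := by
  ext x
  obtain ⟨y, hy⟩ := hrange x
  calc
    A (Pr x) = Pr (Pr y) := by rw [← hy, ← mul_apply_eq_comp, hPr]
    _ = (Pr * A) (Pr x) := by rw [hy]; rfl
    _ = 0 := by rw [hPrA]; rfl

theorem isUnit_add_of_existsUnique_ker [CompleteSpace E] (hPr : IsIdempotentElem Pr)
    (hPrA : Pr * A = 0) (hAPr : A * Pr = 0)
    (hker : ∀ y, Pr y = 0 → ∃! u, Pr u = 0 ∧ A u = y) : IsUnit (A + Pr) := by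
  have hPr' : ∀ x, Pr (Pr x) = Pr x := DFunLike.congr_fun hPr
  have hPrA' : ∀ x, Pr (A x) = 0 := DFunLike.congr_fun hPrA
  have hAPr' : ∀ x, A (Pr x) = 0 := DFunLike.congr_fun hAPr
  rw [ContinuousLinearMap.isUnit_iff_bijective]
  constructor
  · rw [injective_iff_map_eq_zero]
    intro x hx
    rw [add_apply] at hx
    have hPrx : Pr x = 0 := by
      simpa only [map_add, hPrA', hPr', zero_add, map_zero] using congrArg Pr hx
    have hAx : A x = 0 := by rwa [hPrx, add_zero] at hx
    exact (hker 0 (map_zero _)).unique ⟨hPrx, hAx⟩ ⟨map_zero _, map_zero _⟩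
  · intro y
    obtain ⟨u, ⟨hPru, hAu⟩, -⟩ := hker (y - Pr y) (by rw [map_sub, hPr', sub_self])
    exact ⟨u + Pr y, by simp [hPru, hAu, hPr', hAPr']⟩

theorem exists_mul_eq_one_sub_of_isUnit_add (hPr : IsIdempotentElem Pr) (hAPr : A * Pr = 0)
    (hunit : IsUnit (A + Pr)) : ∃ S : E →L[𝕜] E, S * A = 1 - Pr := by
  obtain ⟨T, hT⟩ := hunit
  refine ⟨↑T⁻¹, (Units.inv_mul_eq_iff_eq_mul T).mpr ?_⟩
  rw [hT, mul_sub, mul_one, add_mul, hAPr, hPr.eq, zero_add, add_sub_cancel_right]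

end SpectralProjector

section EigenvaluePerturbation

variable {α 𝕜 E : Type*} [NontriviallyNormedField 𝕜] [NormedAddCommGroup E] [NormedSpace 𝕜 E]
  {l : Filter α}

theorem isLittleO_of_smul_isLittleO_smul {a b : α → 𝕜} {x : α → E}
    (h : (fun i => a i • x i) =o[l] fun i => b i • x i) (hx : ∀ᶠ i in l, x i ≠ 0) : a =o[l] b := by
  rw [isLittleO_iff] at h ⊢
  intro c hc
  filter_upwards [h hc, hx] with i hi hxi
  rw [norm_smul, norm_smul, ← mul_assoc] at hi
  exact le_of_mul_le_mul_right hi (norm_pos_iff.mpr hxi)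

theorem isLittleO_clm_apply {F : Type*} [NormedAddCommGroup F] [NormedSpace 𝕜 F]
    {R : α → E →L[𝕜] F} {ε : α → 𝕜} (hR : R =o[l] ε) (x : α → E) :
    (fun i => R i (x i)) =o[l] fun i => ε i • x i := by
  rw [isLittleO_iff] at hR ⊢
  intro c hc
  filter_upwards [hR hc] with i hi
  rw [norm_smul, ← mul_assoc]
  exact (R i).le_of_opNorm_le hi (x i)

variable {A B Pr S : E →L[𝕜] E} {M : α → E →L[𝕜] E} {ε μ : α → 𝕜} {x : α → E} {s : 𝕜}

theorem eigenvector_sub_apply_isLittleO (hS : S * A = 1 - Pr) (hε : Tendsto ε l (𝓝 0))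
    (hM : (fun i => M i - A - ε i • B) =o[l] ε) (hμ : Tendsto μ l (𝓝 0))
    (hx : ∀ᶠ i in l, M i (x i) = μ i • x i) : (fun i => x i - Pr (x i)) =o[l] x := by
  have smul_isLittleO {a : α → 𝕜} (ha : Tendsto a l (𝓝 0)) : (fun i => a i • x i) =o[l] x := by
    simpa only [one_smul] using
      ((isLittleO_one_iff 𝕜).mpr ha).smul_isBigO (isBigO_refl x l)
  have hAx : (fun i => A (x i)) =o[l] x := by
    have hBx : (fun i => B (ε i • x i)) =o[l] x :=
      (B.isBigO_comp _ l).trans_isLittleO (smul_isLittleO hε)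
    have hRx := (isLittleO_clm_apply hM x).trans (smul_isLittleO hε)
    refine (((smul_isLittleO hμ).sub hBx).sub hRx).congr' ?_ .rfl
    filter_upwards [hx] with i hi
    simp [← hi]
  refine ((S.isBigO_comp _ l).trans_isLittleO hAx).congr_left fun i => ?_
  exact DFunLike.congr_fun hS (x i)

theorem eigenvalue_sub_mul_isLittleO (hS : S * A = 1 - Pr) (hPrA : Pr * A = 0)
    (hPrB : Pr * B * Pr = s • Pr) (hε : Tendsto ε l (𝓝 0))
    (hM : (fun i => M i - A - ε i • B) =o[l] ε) (hμ : Tendsto μ l (𝓝 0))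
    (heig : ∀ᶠ i in l, ∃ x, x ≠ 0 ∧ M i x = μ i • x) :
    (fun i => μ i - ε i * s) =o[l] ε := by
  obtain rfl | _ := l.eq_or_neBot
  · exact isLittleO_bot _ _
  obtain ⟨x, hx⟩ := heig.choice
  have hx_sub : (fun i => x i - Pr (x i)) =o[l] x :=
    eigenvector_sub_apply_isLittleO hS hε hM hμ (hx.mono fun _ hi => hi.2)
  have hx_le : x =O[l] fun i => Pr (x i) := by
    simpa only [sub_sub_cancel] using hx_sub.right_isBigO_sub
  have hPrx_ne : ∀ᶠ i in l, Pr (x i) ≠ 0 := by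
    filter_upwards [hx, hx_le.eq_zero_imp] with i hi hzero hPrxi
    exact hi.1 (hzero hPrxi)
  have hcorrection : (fun i => ε i • Pr (B (x i - Pr (x i)))) =o[l] fun i => ε i • x i :=
    (isBigO_refl ε l).smul_isLittleO (((Pr * B).isBigO_comp _ l).trans_isLittleO hx_sub)
  have hremainder : (fun i => Pr ((M i - A - ε i • B) (x i))) =o[l] fun i => ε i • x i :=
    (Pr.isBigO_comp _ l).trans_isLittleO (isLittleO_clm_apply hM x)
  have hprojected :
      (fun i => (μ i - ε i * s) • Pr (x i)) =o[l] fun i => ε i • x i := by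
    refine (hremainder.add hcorrection).congr' ?_ .rfl
    filter_upwards [hx] with i hi
    have hPrAx : Pr (A (x i)) = 0 := DFunLike.congr_fun hPrA (x i)
    have hPrBx : Pr (B (Pr (x i))) = s • Pr (x i) := DFunLike.congr_fun hPrB (x i)
    simp only [sub_apply, smul_apply, map_sub, map_smul,
      hi.2, hPrAx, hPrBx, smul_sub, sub_smul, mul_smul]
    abel
  exact isLittleO_of_smul_isLittleO_smul
    (hprojected.trans_isBigO ((isBigO_refl ε l).smul hx_le)) hPrx_ne

end EigenvaluePerturbation

section Linearization

variable {α 𝕜 E F : Type*} [NontriviallyNormedField 𝕜] [NormedAddCommGroup E] [NormedSpace 𝕜 E]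
  [NormedAddCommGroup F] [NormedSpace 𝕜 F] {l : Filter α} {ε : α → 𝕜} {w : α → E} {v₀ w₀ : E}

theorem tendsto_add_smul (hε : Tendsto ε l (𝓝 0)) (hw : Tendsto w l (𝓝 w₀)) :
    Tendsto (fun i => v₀ + ε i • w i) l (𝓝 v₀) := by
  simpa only [zero_smul, add_zero] using (hε.smul hw).const_add v₀

theorem smul_sub_isLittleO (hw : Tendsto w l (𝓝 w₀)) :
    (fun i => ε i • (w i - w₀)) =o[l] ε := by
  have hsub : (fun i => w i - w₀) =o[l] fun _ => (1 : 𝕜) :=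
    (isLittleO_one_iff 𝕜).mpr (tendsto_sub_nhds_zero_iff.mpr hw)
  simpa only [smul_eq_mul, mul_one] using (isBigO_refl ε l).smul_isLittleO hsub

theorem sub_sub_smul_isLittleO_of_hasFDerivAt {f : E → F} {f' : E →L[𝕜] F}
    (hf : HasFDerivAt f f' v₀) (hε : Tendsto ε l (𝓝 0)) (hw : Tendsto w l (𝓝 w₀)) :
    (fun i => f (v₀ + ε i • w i) - f v₀ - ε i • f' w₀) =o[l] ε := by
  have hsmul_le : (fun i => ε i • w i) =O[l] ε := by
    simpa only [smul_eq_mul, mul_one] using (isBigO_refl ε l).smul (hw.isBigO_one 𝕜)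
  have hremainder : (fun i => f (v₀ + ε i • w i) - f v₀ - f' (ε i • w i)) =o[l] ε := by
    have := hf.isLittleO.comp_tendsto (tendsto_add_smul hε hw)
    simp only [Function.comp_def, add_sub_cancel_left] at this
    exact this.trans_isBigO hsmul_le
  have hdirection : (fun i => f' (ε i • (w i - w₀))) =o[l] ε :=
    (f'.isBigO_comp _ l).trans_isLittleO (smul_sub_isLittleO hw)
  refine (hremainder.add hdirection).congr_left fun i => ?_
  rw [smul_sub, map_sub, map_smul f' (ε i) w₀]
  abel

theorem continuousAt_partial_fderiv_left {G : Type*} [NormedAddCommGroup G] [NormedSpace 𝕜 G]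
    {Q : E → G → F} {e : G} (hQ : ContDiffAt 𝕜 1 (Function.uncurry Q) (v₀, e)) :
    ContinuousAt (fun p : E × G => fderiv 𝕜 (fun v => Q v p.2) p.1) (v₀, e) := by
  have hswap : ContDiffAt 𝕜 1 (Function.uncurry fun (p : E × G) v => Q v p.2) ((v₀, e), v₀) :=
    ContDiffAt.comp (f := fun q : (E × G) × E => (q.2, q.1.2)) ((v₀, e), v₀) hQ
      (contDiffAt_snd.prodMk contDiffAt_fst.snd)
  exact (hswap.fderiv (m := 0) contDiffAt_fst (by norm_num)).continuousAt

theorem fderiv_add_smul_sub_isLittleO {P : E → F} {Q : E → 𝕜 → F}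
    (hP : ContDiffAt 𝕜 2 P v₀) (hQ : ContDiffAt 𝕜 1 (Function.uncurry Q) (v₀, 0))
    (hε : Tendsto ε l (𝓝 0)) (hw : Tendsto w l (𝓝 w₀)) :
    (fun i => fderiv 𝕜 (fun v => P v + ε i • Q v (ε i)) (v₀ + ε i • w i) - fderiv 𝕜 P v₀
      - ε i • (fderiv 𝕜 (fderiv 𝕜 P) v₀ w₀ + fderiv 𝕜 (fun v => Q v 0) v₀)) =o[l] ε := by
  have hv := tendsto_add_smul (v₀ := v₀) hε hw
  have hvε := hv.prodMk_nhds hε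
  have hP_expansion := sub_sub_smul_isLittleO_of_hasFDerivAt
    ((hP.fderiv_right (m := 1) (by norm_num)).differentiableAt one_ne_zero).hasFDerivAt hε hw
  have hQ_expansion :=
    smul_sub_isLittleO (ε := ε) ((continuousAt_partial_fderiv_left hQ).tendsto.comp hvε)
  refine (hP_expansion.add hQ_expansion).congr' ?_ .rfl
  filter_upwards [hv.eventually (hP.eventually (by simp)),
    hvε.eventually (hQ.eventually (by simp))] with i hPi hQi
  have hPd : DifferentiableAt 𝕜 P (v₀ + ε i • w i) := hPi.differentiableAt two_ne_zero
  have hQd : DifferentiableAt 𝕜 (fun v => Q v (ε i)) (v₀ + ε i • w i) :=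
    (hQi.differentiableAt one_ne_zero).comp (f := fun v => (v, ε i)) _
      (differentiableAt_id.prodMk (differentiableAt_const _))
  rw [fderiv_fun_add hPd (hQd.fun_const_smul _), fderiv_fun_const_smul hQd]
  simp only [Function.comp_apply, smul_sub, smul_add]
  abel

end Linearization

section Bifurcation

variable {𝕜 E : Type*} [NontriviallyNormedField 𝕜] [NormedAddCommGroup E] [NormedSpace 𝕜 E]

theorem fderiv_apply_deriv_eq_zero {F : Type*} [NormedAddCommGroup F] [NormedSpace 𝕜 F]
    {P : E → F} {x₀ : 𝕜 → E} {θ₀ : 𝕜} (hP : DifferentiableAt 𝕜 P (x₀ θ₀))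
    (hx₀ : DifferentiableAt 𝕜 x₀ θ₀) (hzero : ∀ᶠ θ in 𝓝 θ₀, P (x₀ θ) = 0) :
    fderiv 𝕜 P (x₀ θ₀) (deriv x₀ θ₀) = 0 := by
  rw [← fderiv_comp_deriv θ₀ hP hx₀]
  exact (EventuallyEq.deriv_eq hzero).trans (deriv_const θ₀ 0)

theorem mul_mul_eq_smul_of_finrank_ker_eq_one {A B Pr : E →L[𝕜] E} {e : E} {s : 𝕜}
    (hker : Module.finrank 𝕜 (LinearMap.ker (A : E →ₗ[𝕜] E)) = 1) (hAPr : A * Pr = 0)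
    (he : A e = 0) (he_ne : e ≠ 0) (hBe : Pr (B e) = s • e) : Pr * B * Pr = s • Pr := by
  ext x
  obtain ⟨c, hc⟩ := (finrank_eq_one_iff_of_nonzero' (⟨e, he⟩ : LinearMap.ker (A : E →ₗ[𝕜] E))
    (Subtype.coe_ne_coe.mp he_ne)).mp hker ⟨Pr x, DFunLike.congr_fun hAPr x⟩
  have hPrx : c • e = Pr x := congrArg Subtype.val hc
  simp only [mul_apply_eq_comp, smul_apply]
  rw [← hPrx, map_smul, map_smul, hBe, smul_comm]

theorem stmt_6_general [CompleteSpace E] {P : E → E} {Q : E → 𝕜 → E} {v₀ : E}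
    (hP : ContDiffAt 𝕜 2 P v₀) (hQ : ContDiffAt 𝕜 1 (Function.uncurry Q) (v₀, 0))
    {Pr : E →L[𝕜] E} (hPr : ∀ x, Pr (Pr x) = Pr x)
    (hIm : ∀ x, fderiv 𝕜 P v₀ (Pr x) ∈ range Pr) (hPrP' : ∀ x, Pr (fderiv 𝕜 P v₀ x) = 0)
    (hinvKer : ∀ y, Pr y = 0 → ∃! u, Pr u = 0 ∧ fderiv 𝕜 P v₀ u = y)
    (hsimple : Module.finrank 𝕜 (LinearMap.ker (fderiv 𝕜 P v₀ : E →ₗ[𝕜] E)) = 1)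
    {x₀ : 𝕜 → E} {θ₀ : 𝕜} (hx₀ : DifferentiableAt 𝕜 x₀ θ₀)
    (hx₀P : ∀ᶠ θ in 𝓝 θ₀, P (x₀ θ) = 0) (hx₀v₀ : x₀ θ₀ = v₀) (hx₀' : deriv x₀ θ₀ ≠ 0)
    {α : Type*} {l : Filter α} {ε : α → 𝕜} (hε : Tendsto ε l (𝓝 0))
    {w : α → E} {w₀ : E} (hw : Tendsto w l (𝓝 w₀)) {lam : α → 𝕜}
    (hlamEig : ∀ᶠ i in l, ∃ x, x ≠ 0 ∧
      fderiv 𝕜 (fun v => P v + ε i • Q v (ε i)) (v₀ + ε i • w i) x = lam i • x)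
    (hlam0 : Tendsto lam l (𝓝 0)) {lamStar : 𝕜}
    (hlamStar : Pr (fderiv 𝕜 (fderiv 𝕜 P) v₀ w₀ (deriv x₀ θ₀))
      + Pr (fderiv 𝕜 (fun v => Q v 0) v₀ (deriv x₀ θ₀)) = lamStar • deriv x₀ θ₀) :
    (fun i => lam i - ε i * lamStar) =o[l] ε := by
  subst hx₀v₀
  have hidem : IsIdempotentElem Pr := ContinuousLinearMap.ext hPr
  have hPrA : Pr * fderiv 𝕜 P (x₀ θ₀) = 0 := ContinuousLinearMap.ext hPrP'
  have hAPr := mul_eq_zero_of_apply_mem_range hidem hPrA hIm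
  obtain ⟨S, hS⟩ := exists_mul_eq_one_sub_of_isUnit_add hidem hAPr
    (isUnit_add_of_existsUnique_ker hidem hPrA hAPr hinvKer)
  have htangent := fderiv_apply_deriv_eq_zero (hP.differentiableAt two_ne_zero) hx₀ hx₀P
  have hPrB := mul_mul_eq_smul_of_finrank_ker_eq_one hsimple hAPr htangent hx₀'
    (B := fderiv 𝕜 (fderiv 𝕜 P) (x₀ θ₀) w₀ + fderiv 𝕜 (fun v => Q v 0) (x₀ θ₀))
    ((map_add Pr _ _).trans hlamStar)
  exact eigenvalue_sub_mul_isLittleO hS hPrA hPrB hε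
    (fderiv_add_smul_sub_isLittleO hP hQ hε hw) hlam0 hlamEig

end Bifurcation

/-- Theorem 2: under the hypotheses of Theorem 1, with `0` a simple eigenvalue of
`P'(v₀)`, `v₀ = x₀(θ₀)` on a `C²` curve of zeros of `P`, `w₀` the zero of `Ψ(·,0)`,
`w_ε` the zeros of `Ψ(·,ε)` converging to `w₀`, `λ_ε` eigenvalues of `Φ'_v(v₀+εw_ε,ε)`
tending to `0`, and `λ_*` defined by
`ΠP''(v₀)[w₀, ẋ₀(θ₀)] + ΠQ'_v(v₀,0)ẋ₀(θ₀) = λ_* ẋ₀(θ₀)`, one has `λ_ε = ελ_* + o(ε)`. -/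
theorem stmt_6 {n : ℕ}
    (P : EuclideanSpace ℝ (Fin n) → EuclideanSpace ℝ (Fin n))
    (Q : EuclideanSpace ℝ (Fin n) → ℝ → EuclideanSpace ℝ (Fin n))
    (hP : ContDiff ℝ 2 P)
    (hQ : ContDiff ℝ 1 fun p : EuclideanSpace ℝ (Fin n) × ℝ => Q p.1 p.2)
    (v₀ : EuclideanSpace ℝ (Fin n)) (hv₀ : P v₀ = 0)
    (hsing : ¬ Function.Bijective (fderiv ℝ P v₀))
    (Pr : EuclideanSpace ℝ (Fin n) →L[ℝ] EuclideanSpace ℝ (Fin n))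
    (hPr : ∀ x, Pr (Pr x) = Pr x)
    (hIm : ∀ x, fderiv ℝ P v₀ (Pr x) ∈ Set.range Pr)
    (hKer : ∀ x, Pr x = 0 → Pr (fderiv ℝ P v₀ x) = 0)
    (hPrP' : ∀ x, Pr (fderiv ℝ P v₀ x) = 0)
    (hinvKer : ∀ y : EuclideanSpace ℝ (Fin n), Pr y = 0 →
      ∃! u : EuclideanSpace ℝ (Fin n), Pr u = 0 ∧ fderiv ℝ P v₀ u = y)
    (hPrQ : Pr (Q v₀ 0) = 0)
    (hPP : ∀ r s : EuclideanSpace ℝ (Fin n),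
      Pr (fderiv ℝ (fderiv ℝ P) v₀ (Pr r) (Pr s)) = 0)
    (hINV : ∀ u₁ : EuclideanSpace ℝ (Fin n),
      Pr u₁ = 0 → fderiv ℝ P v₀ u₁ = Q v₀ 0 →
      ∀ y : EuclideanSpace ℝ (Fin n), Pr y = y →
        ∃! h : EuclideanSpace ℝ (Fin n), Pr h = h ∧
          -Pr (fderiv ℝ (fderiv ℝ P) v₀ u₁ h)
            + Pr (fderiv ℝ (fun v => Q v 0) v₀ h) = y)
    -- `0` is a simple eigenvalue of `P'(v₀)`: one-dimensional kernel, no generalized kernel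
    (hsimple : Module.finrank ℝ
        (LinearMap.ker ((fderiv ℝ P v₀ : _) : EuclideanSpace ℝ (Fin n) →ₗ[ℝ]
          EuclideanSpace ℝ (Fin n))) = 1 ∧
      ∀ x, fderiv ℝ P v₀ (fderiv ℝ P v₀ x) = 0 → fderiv ℝ P v₀ x = 0)
    -- a `C²` curve of zeros of `P` through `v₀`
    (x₀ : ℝ → EuclideanSpace ℝ (Fin n)) (θ₀ : ℝ)
    (hx₀C2 : ContDiff ℝ 2 x₀) (hx₀P : ∀ θ, P (x₀ θ) = 0)
    (hx₀v₀ : x₀ θ₀ = v₀) (hx₀' : deriv x₀ θ₀ ≠ 0)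
    (hrange : Pr (deriv x₀ θ₀) = deriv x₀ θ₀)
    -- `w₀` is the zero of `Ψ(·,0)`
    (w₀ : EuclideanSpace ℝ (Fin n))
    (hw₀ : (1/2 : ℝ) • Pr (fderiv ℝ (fderiv ℝ P) v₀ w₀ w₀)
        + Pr (fderiv ℝ (fun v => Q v 0) v₀ w₀)
        + Pr (deriv (fun e => Q v₀ e) 0)
        + (fderiv ℝ P v₀ w₀ - Pr (fderiv ℝ P v₀ w₀))
        + (Q v₀ 0 - Pr (Q v₀ 0)) = 0)
    -- the family `w_ε` of zeros of `Ψ(·,ε)` converging to `w₀`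
    (w : ℝ → EuclideanSpace ℝ (Fin n))
    (hw : Tendsto w (𝓝[>] (0:ℝ)) (𝓝 w₀))
    (hwzero : ∀ᶠ ε in 𝓝[>] (0:ℝ),
      ε⁻¹ • ((P (v₀ + ε • w ε) + ε • Q (v₀ + ε • w ε) ε)
          - Pr (P (v₀ + ε • w ε) + ε • Q (v₀ + ε • w ε) ε)) +
        (ε ^ 2)⁻¹ • Pr (P (v₀ + ε • w ε) + ε • Q (v₀ + ε • w ε) ε) = 0)
    -- the eigenvalues `λ_ε` of `Φ'_v(v₀+εw_ε,ε)` with `λ_ε → 0`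
    (lam : ℝ → ℝ)
    (hlamEig : ∀ᶠ ε in 𝓝[>] (0:ℝ), ∃ l : EuclideanSpace ℝ (Fin n), l ≠ 0 ∧
      fderiv ℝ (fun v => P v + ε • Q v ε) (v₀ + ε • w ε) l = lam ε • l)
    (hlam0 : Tendsto lam (𝓝[>] (0:ℝ)) (𝓝 0))
    -- `λ_*`
    (lamStar : ℝ)
    (hlamStar : Pr (fderiv ℝ (fderiv ℝ P) v₀ w₀ (deriv x₀ θ₀))
        + Pr (fderiv ℝ (fun v => Q v 0) v₀ (deriv x₀ θ₀)) = lamStar • deriv x₀ θ₀) :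
    (fun ε => lam ε - ε * lamStar) =o[𝓝[>] (0:ℝ)] (fun ε => ε) := by
  exact stmt_6_general hP.contDiffAt hQ.contDiffAt hPr hIm hPrP' hinvKer hsimple.1
    (hx₀C2.differentiable two_ne_zero θ₀) (.of_forall hx₀P) hx₀v₀ hx₀'
    (ε := fun ε => ε) (tendsto_id.mono_left nhdsWithin_le_nhds) hw hlamEig hlam0 hlamStar
end

section
/- Consider ẋ = f(x) + εg(t,x,ε) with f ∈ C²(ℝⁿ,ℝⁿ) and g ∈ C¹(ℝ×ℝⁿ×[0,1],ℝⁿ), g T-periodic in t; assume every Cauchy problem for this equation has a unique solution defined on [0,T]. Let x(·,v,ε) denote the solution with x(0,v,ε)=v, let 𝒫_ε(v) = x(T,v,ε) be the Poincaré map, and set P(v) = 𝒫₀(v) − v and Q(v,ε) = (𝒫_ε(v) − 𝒫₀(v))/ε for ε > 0. Let x₀ be a T-periodic solution of ẋ = f(x) and z₀ a T-periodic solution of the adjoint linearized system ż = −(f'(x₀(t)))*z. Then for each v the limit Q(v,0) := lim_{ε→0⁺} Q(v,ε) exists, the resulting function Q belongs to C¹(ℝⁿ×[0,1],ℝⁿ),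 and for every θ ∈ [0,T] the Malkin bifurcation function M(θ) = ∫₀ᵀ ⟨g(t, x₀(t+θ), 0), z₀(t+θ)⟩ dt satisfies M(θ) = ⟨Q(x₀(θ),0), z₀(θ)⟩. -/
open Set Filter Topology
open scoped InnerProductSpace

/-!
The rescaled deviation `y = (x_ε - x) / ε` between the perturbed and the unperturbed solution
starting at `v` satisfies `ẏ = (f(x + ε y) - f(x)) / ε + g(t, x + ε y, ε)`, `y(0) = 0`. As `f` is
`C²`, the divided difference on the right extends to a `C¹` function of `(x, y, ε)` up to and
including `ε = 0`, so that `Q(v, ε) = y(T)` is the time-`T` value of solutions of a `C¹` equation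
and depends on `(v, ε)` in a `C¹` way. At `ε = 0` the equation becomes the linear one
`ẏ = f'(x) y + g(t, x, 0)`; hence `⟨y, z⟩` has derivative `⟨g(t, x, 0), z⟩` for every solution `z`
of the adjoint equation, and integrating over `[0, T]` gives Malkin's function.
-/

open Function
open scoped NNReal

section Gronwall

lemma gronwallBound_le_mul_exp {δ K ε t : ℝ} (hK : 0 ≤ K) (hε : 0 ≤ ε) :
    gronwallBound δ K ε t ≤ (δ + ε * t) * Real.exp (K * t) := by
  rcases hK.eq_or_lt with rfl | hK
  · simp [gronwallBound_K0]
  have hexp : Real.exp (K * t) - 1 ≤ K * t * Real.exp (K * t) := by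
    have h := mul_le_mul_of_nonneg_right (Real.add_one_le_exp (-(K * t))) (Real.exp_nonneg (K * t))
    rw [← Real.exp_add, neg_add_cancel, Real.exp_zero] at h
    linarith
  calc gronwallBound δ K ε t = δ * Real.exp (K * t) + ε / K * (Real.exp (K * t) - 1) := by
        rw [gronwallBound_of_K_ne_0 hK.ne']
    _ ≤ δ * Real.exp (K * t) + ε / K * (K * t * Real.exp (K * t)) := by gcongr
    _ = (δ + ε * t) * Real.exp (K * t) := by field_simp

variable {E : Type*} [NormedAddCommGroup E] [NormedSpace ℝ E] {u u' : ℝ → E} {a b δ K : ℝ}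

lemma norm_le_mul_exp_of_norm_deriv_le {ε : ℝ} (hK : 0 ≤ K) (hε : 0 ≤ ε)
    (hu : ∀ t ∈ Icc a b, HasDerivWithinAt u (u' t) (Icc a b) t) (ha : ‖u a‖ ≤ δ)
    (bound : ∀ t ∈ Ico a b, ‖u' t‖ ≤ K * ‖u t‖ + ε) :
    ∀ t ∈ Icc a b, ‖u t‖ ≤ (δ + ε * (b - a)) * Real.exp (K * (b - a)) := by
  intro t ht
  have hright : ∀ s ∈ Ico a b, HasDerivWithinAt u (u' s) (Ici s) s := fun s hs ↦
    (hu s (Ico_subset_Icc_self hs)).mono_of_mem_nhdsWithin (Icc_mem_nhdsGE_of_mem hs)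
  have hδ : 0 ≤ δ := (norm_nonneg _).trans ha
  have htb : t - a ≤ b - a := sub_le_sub_right ht.2 a
  calc ‖u t‖ ≤ gronwallBound δ K ε (t - a) := norm_le_gronwallBound_of_norm_deriv_right_le
        (fun s hs ↦ (hu s hs).continuousWithinAt) hright ha bound t ht
    _ ≤ gronwallBound δ K ε (b - a) := gronwallBound_mono hδ hε hK htb
    _ ≤ (δ + ε * (b - a)) * Real.exp (K * (b - a)) := gronwallBound_le_mul_exp hK hε

/- Growth at the strictly larger rate `K + 1` leaves room for the fencing lemma, which only needs
the derivative bound at the instants where `‖u‖` meets the fence. -/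
lemma norm_le_mul_exp_of_norm_deriv_le_of_norm_lt (hK : 0 ≤ K)
    (hu : ∀ t ∈ Icc a b, HasDerivWithinAt u (u' t) (Icc a b) t)
    (ha : ‖u a‖ * Real.exp ((K + 1) * (b - a)) < δ)
    (bound : ∀ t ∈ Ico a b, ‖u t‖ < δ → ‖u' t‖ ≤ K * ‖u t‖) :
    ∀ t ∈ Icc a b, ‖u t‖ ≤ ‖u a‖ * Real.exp ((K + 1) * (b - a)) := by
  have hfence : ∀ d > ‖u a‖, d * Real.exp ((K + 1) * (b - a)) < δ →
      ∀ t ∈ Icc a b, ‖u t‖ ≤ d * Real.exp ((K + 1) * (b - a)) := by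
    intro d hd hdδ t ht
    have hd0 : 0 < d := (norm_nonneg _).trans_lt hd
    have hmono : ∀ s ∈ Icc a b,
        d * Real.exp ((K + 1) * (s - a)) ≤ d * Real.exp ((K + 1) * (b - a)) := by
      intro s hs
      gcongr
      exact hs.2
    refine (image_norm_le_of_norm_deriv_right_lt_deriv_boundary
      (B := fun s ↦ d * Real.exp ((K + 1) * (s - a)))
      (B' := fun s ↦ (K + 1) * (d * Real.exp ((K + 1) * (s - a))))
      (fun s hs ↦ (hu s hs).continuousWithinAt)
      (fun s hs ↦ (hu s (Ico_subset_Icc_self hs)).mono_of_mem_nhdsWithin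
        (Icc_mem_nhdsGE_of_mem hs)) (by simpa using hd.le) (fun s ↦ ?_) (fun s hs hus ↦ ?_)
      ht).trans (hmono t ht)
    · exact (((((hasDerivAt_id s).sub_const a).const_mul (K + 1)).exp).const_mul d).congr_deriv
        (by simp; ring)
    · have hpos : 0 < d * Real.exp ((K + 1) * (s - a)) := by positivity
      have := bound s hs (hus ▸ (hmono s (Ico_subset_Icc_self hs)).trans_lt hdδ)
      rw [hus] at this
      linarith
  intro t ht
  have hc := Real.exp_pos ((K + 1) * (b - a))
  by_contra! hlt
  obtain ⟨d, hd, hd'⟩ := exists_between (lt_min ((lt_div_iff₀ hc).2 hlt) ((lt_div_iff₀ hc).2 ha))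
  rw [lt_min_iff, lt_div_iff₀ hc, lt_div_iff₀ hc] at hd'
  exact (hfence d hd hd'.2 t ht).not_gt hd'.1

end Gronwall

section RadialRetraction

variable {E : Type*} [NormedAddCommGroup E] [NormedSpace ℝ E] {R : ℝ}

/-- The radial retraction of a normed space onto the closed ball of radius `R` centred at `0`. It
is used to truncate a vector field without losing its Lipschitz continuity. -/
noncomputable def radialRetraction (R : ℝ) (x : E) : E := (R / max R ‖x‖) • x

lemma radialRetraction_of_norm_le (hR : 0 < R) {x : E} (hx : ‖x‖ ≤ R) :
    radialRetraction R x = x := by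
  rw [radialRetraction, max_eq_left hx, div_self hR.ne', one_smul]

lemma norm_radialRetraction (hR : 0 < R) (x : E) :
    ‖radialRetraction R x‖ = R / max R ‖x‖ * ‖x‖ := by
  rw [radialRetraction, norm_smul, Real.norm_of_nonneg (by positivity)]

lemma norm_radialRetraction_le_radius (hR : 0 < R) (x : E) : ‖radialRetraction R x‖ ≤ R := by
  rw [norm_radialRetraction hR, div_mul_eq_mul_div, div_le_iff₀ (by positivity)]
  gcongr
  exact le_max_right _ _

lemma norm_radialRetraction_le_norm (hR : 0 < R) (x : E) : ‖radialRetraction R x‖ ≤ ‖x‖ := by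
  rw [norm_radialRetraction hR]
  exact mul_le_of_le_one_left (norm_nonneg _) (div_le_one_of_le₀ (le_max_left _ _) (by positivity))

lemma lipschitzWith_radialRetraction (hR : 0 < R) :
    LipschitzWith 2 (radialRetraction R : E → E) := by
  refine LipschitzWith.of_dist_le_mul fun x y ↦ ?_
  rw [dist_eq_norm, dist_eq_norm, NNReal.coe_ofNat]
  set p := max R ‖x‖
  set q := max R ‖y‖
  have hp : 0 < p := by positivity
  have hq : 0 < q := by positivity
  have hsplit : radialRetraction R x - radialRetraction R y
      = (R / p) • (x - y) + ((q - p) / p) • radialRetraction R y := by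
    have : (q - p) / p * (R / q) = R / p - R / q := by field_simp
    rw [radialRetraction, radialRetraction, smul_smul, this]
    module
  have hqp : |q - p| ≤ ‖x - y‖ := by
    rw [norm_sub_rev]
    simpa only [p, q, max_comm R] using
      (abs_max_sub_max_le_abs ‖y‖ ‖x‖ R).trans (abs_norm_sub_norm_le y x)
  have hfirst : ‖(R / p) • (x - y)‖ ≤ ‖x - y‖ := by
    rw [norm_smul, Real.norm_of_nonneg (by positivity)]
    exact mul_le_of_le_one_left (norm_nonneg _) (div_le_one_of_le₀ (le_max_left _ _) hp.le)
  have hsecond : ‖((q - p) / p) • radialRetraction R y‖ ≤ ‖x - y‖ := by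
    rw [norm_smul, norm_div, Real.norm_eq_abs, Real.norm_of_nonneg hp.le, div_mul_eq_mul_div,
      div_le_iff₀ hp]
    gcongr
    exact (norm_radialRetraction_le_radius hR y).trans (le_max_left _ _)
  rw [hsplit, two_mul]
  exact norm_add_le_of_le hfirst hsecond

end RadialRetraction

section GlobalExistence

variable {E : Type*} [NormedAddCommGroup E] [NormedSpace ℝ E] [CompleteSpace E] {a b : ℝ}

lemma exists_isIntegralCurveOn_of_lipschitzWith_of_norm_le {v : ℝ → E → E} {K L : ℝ≥0}
    (hab : a ≤ b) (hv : ∀ t ∈ Icc a b, LipschitzWith K (v t))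
    (hvc : ∀ x, ContinuousOn (v · x) (Icc a b)) (hvL : ∀ t ∈ Icc a b, ∀ x, ‖v t x‖ ≤ L) (x₀ : E) :
    ∃ γ : ℝ → E, γ a = x₀ ∧ IsIntegralCurveOn γ v (Icc a b) := by
  have hPL : IsPicardLindelof v (⟨a, left_mem_Icc.2 hab⟩ : Icc a b) x₀
      (L * (b - a).toNNReal) 0 L K :=
    { lipschitzOnWith := fun t ht ↦ (hv t ht).lipschitzOnWith
      continuousOn := fun x _ ↦ hvc x
      norm_le := fun t ht x _ ↦ hvL t ht x
      mul_max_le := by simp [hab] }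
  exact hPL.exists_eq_forall_mem_Icc_hasDerivWithinAt₀

/- Grönwall's inequality bounds every solution of the truncated equation by a radius which does not
depend on the truncation; truncating beyond that radius does not affect the solution. -/
theorem exists_isIntegralCurveOn_of_lipschitzWith {v : ℝ → E → E} {K : ℝ≥0}
    (hab : a ≤ b) (hv : ∀ t ∈ Icc a b, LipschitzWith K (v t))
    (hvc : ∀ x, ContinuousOn (v · x) (Icc a b)) (x₀ : E) :
    ∃ γ : ℝ → E, γ a = x₀ ∧ IsIntegralCurveOn γ v (Icc a b) := by
  obtain ⟨N, hN⟩ := isCompact_Icc.exists_bound_of_continuousOn (hvc 0)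
  have hN0 : 0 ≤ N := (norm_nonneg _).trans (hN a (left_mem_Icc.2 hab))
  have hgrowth : ∀ t ∈ Icc a b, ∀ x, ‖v t x‖ ≤ K * ‖x‖ + N := by
    intro t ht x
    have hLip : ‖v t x - v t 0‖ ≤ K * ‖x‖ := by
      simpa only [dist_eq_norm, sub_zero] using (hv t ht).dist_le_mul x 0
    calc ‖v t x‖ ≤ ‖v t x - v t 0‖ + ‖v t 0‖ := norm_le_norm_sub_add _ _
      _ ≤ K * ‖x‖ + N := add_le_add hLip (hN t ht)
  set R := (‖x₀‖ + N * (b - a)) * Real.exp (K * (b - a)) + 1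
  have hR : 0 < R := by
    have := sub_nonneg.2 hab
    positivity
  obtain ⟨γ, hγ₀, hγ⟩ := exists_isIntegralCurveOn_of_lipschitzWith_of_norm_le
    (v := fun t x ↦ v t (radialRetraction R x)) (L := K * R.toNNReal + N.toNNReal) hab
    (fun t ht ↦ (hv t ht).comp (lipschitzWith_radialRetraction hR)) (fun x ↦ hvc _)
    (fun t ht x ↦ by
      push_cast
      rw [Real.coe_toNNReal _ hR.le, Real.coe_toNNReal _ hN0]
      exact (hgrowth t ht _).trans (by gcongr; exact norm_radialRetraction_le_radius hR x)) x₀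
  refine ⟨γ, hγ₀, fun t ht ↦ ?_⟩
  have hγR : ‖γ t‖ ≤ R :=
    (norm_le_mul_exp_of_norm_deriv_le K.coe_nonneg hN0 hγ (congrArg norm hγ₀).le
      (fun s hs ↦ (hgrowth s (Ico_subset_Icc_self hs) _).trans
        (by gcongr; exact norm_radialRetraction_le_norm hR (γ s))) t ht).trans (lt_add_one _).le
  simpa only [radialRetraction_of_norm_le hR hγR] using hγ t ht

theorem exists_isIntegralCurveOn_affine (hab : a ≤ b) {A : ℝ → E →L[ℝ] E} {c : ℝ → E}
    (hA : ContinuousOn A (Icc a b)) (hc : ContinuousOn c (Icc a b)) (x₀ : E) :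
    ∃ γ : ℝ → E, γ a = x₀ ∧ IsIntegralCurveOn γ (fun t x ↦ A t x + c t) (Icc a b) := by
  obtain ⟨M, hM⟩ := isCompact_Icc.exists_bound_of_continuousOn hA
  have hM0 : 0 ≤ M := (norm_nonneg _).trans (hM a (left_mem_Icc.2 hab))
  lift M to ℝ≥0 using hM0
  refine exists_isIntegralCurveOn_of_lipschitzWith (v := fun t x ↦ A t x + c t) (K := M) hab
    (fun t ht ↦ ?_) (fun x ↦ (hA.clm_apply continuousOn_const).add hc) x₀
  refine LipschitzWith.of_dist_le_mul fun x y ↦ ?_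
  rw [dist_add_right, dist_eq_norm, dist_eq_norm, ← map_sub]
  exact (A t).le_of_opNorm_le (hM t ht) _

theorem exists_fundamentalSolution (hab : a ≤ b) {A : ℝ → E →L[ℝ] E}
    (hA : ContinuousOn A (Icc a b)) :
    ∃ U : ℝ → E →L[ℝ] E, U a = .id ℝ E ∧
      IsIntegralCurveOn U (fun t W ↦ (A t).comp W) (Icc a b) := by
  have hcomp := (ContinuousLinearMap.compL ℝ E E E).continuous.comp_continuousOn hA
  simpa using exists_isIntegralCurveOn_affine hab hcomp (c := fun _ ↦ 0) continuousOn_const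
    (.id ℝ E)

end GlobalExistence

section LinearStability

variable {E : Type*} [NormedAddCommGroup E] [NormedSpace ℝ E] {a b : ℝ}

lemma norm_sub_le_of_isIntegralCurveOn_linear {A A₀ : ℝ → E →L[ℝ] E} {y y₀ : ℝ → E} {M N η : ℝ}
    (hA₀ : ∀ t ∈ Icc a b, ‖A₀ t‖ ≤ M) (hA : ∀ t ∈ Icc a b, ‖A t - A₀ t‖ ≤ η)
    (hN : ∀ t ∈ Icc a b, ‖y₀ t‖ ≤ N)
    (hy : IsIntegralCurveOn y (fun t x ↦ A t x) (Icc a b))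
    (hy₀ : IsIntegralCurveOn y₀ (fun t x ↦ A₀ t x) (Icc a b)) :
    ∀ t ∈ Icc a b,
      ‖y t - y₀ t‖ ≤ (‖y a - y₀ a‖ + η * N * (b - a)) * Real.exp ((M + η) * (b - a)) := by
  intro t ht
  have hM : 0 ≤ M := (norm_nonneg _).trans (hA₀ t ht)
  have hη : 0 ≤ η := (norm_nonneg _).trans (hA t ht)
  have hN0 : 0 ≤ N := (norm_nonneg _).trans (hN t ht)
  refine norm_le_mul_exp_of_norm_deriv_le (u := fun t ↦ y t - y₀ t) (add_nonneg hM hη)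
    (mul_nonneg hη hN0) (fun s hs ↦ (hy s hs).sub (hy₀ s hs)) le_rfl (fun s hs ↦ ?_) t ht
  replace hs := Ico_subset_Icc_self hs
  calc ‖A s (y s) - A₀ s (y₀ s)‖
      = ‖A₀ s (y s - y₀ s) + (A s - A₀ s) (y s - y₀ s) + (A s - A₀ s) (y₀ s)‖ := by
        simp only [map_sub, sub_apply]
        congr 1
        abel
    _ ≤ M * ‖y s - y₀ s‖ + η * ‖y s - y₀ s‖ + η * N := by
        exact norm_add_le_of_le (norm_add_le_of_le ((A₀ s).le_of_opNorm_le (hA₀ s hs) _)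
          ((A s - A₀ s).le_of_opNorm_le (hA s hs) _))
          ((A s - A₀ s).le_of_opNorm_le_of_le (hA s hs) (hN s hs))
    _ = (M + η) * ‖y s - y₀ s‖ + η * N := by ring

theorem tendsto_of_isIntegralCurveOn_linear {ι : Type*} {l : Filter ι} {A : ι → ℝ → E →L[ℝ] E}
    {A₀ : ℝ → E →L[ℝ] E} {y : ι → ℝ → E} {y₀ : ℝ → E} (hA₀ : ContinuousOn A₀ (Icc a b))
    (hA : TendstoUniformlyOn A A₀ l (Icc a b))
    (hy : ∀ i, IsIntegralCurveOn (y i) (fun t x ↦ A i t x) (Icc a b))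
    (hy₀ : IsIntegralCurveOn y₀ (fun t x ↦ A₀ t x) (Icc a b))
    (ha : Tendsto (fun i ↦ y i a) l (𝓝 (y₀ a))) :
    ∀ t ∈ Icc a b, Tendsto (fun i ↦ y i t) l (𝓝 (y₀ t)) := by
  intro t ht
  obtain ⟨M, hM⟩ := isCompact_Icc.exists_bound_of_continuousOn hA₀
  obtain ⟨N, hN⟩ := isCompact_Icc.exists_bound_of_continuousOn hy₀.continuousOn
  have hlim : Tendsto (fun η ↦ (η + η * N * (b - a)) * Real.exp ((M + η) * (b - a)))
      (𝓝[>] 0) (𝓝 0) := by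
    refine (Continuous.tendsto' ?_ 0 0 (by simp)).mono_left nhdsWithin_le_nhds
    fun_prop
  rw [Metric.tendsto_nhds]
  intro e he
  obtain ⟨η, hηe, hη⟩ := ((hlim.eventually_lt_const he).and self_mem_nhdsWithin).exists
  filter_upwards [Metric.tendsto_nhds.1 ha η hη, Metric.tendstoUniformlyOn_iff.1 hA η hη]
    with i hia hiA
  rw [dist_eq_norm] at hia ⊢
  refine lt_of_le_of_lt ?_ hηe
  refine (norm_sub_le_of_isIntegralCurveOn_linear hM
    (fun s hs ↦ (dist_eq_norm' (A₀ s) (A i s) ▸ hiA s hs).le) hN (hy i) hy₀ t ht).trans ?_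
  gcongr

end LinearStability

section Compactness

variable {X Y Z : Type*} [PseudoMetricSpace X] [PseudoMetricSpace Y] [PseudoMetricSpace Z]
  {w : X → Y → Z} {γ : X → Y} {s : Set X}

lemma exists_dist_lt_of_dist_lt_of_isCompact (hw : Continuous (uncurry w)) (hs : IsCompact s)
    (hγ : ContinuousOn γ s) {η : ℝ} (hη : 0 < η) :
    ∃ δ > 0, ∀ t ∈ s, ∀ y, dist (γ t) y < δ → dist (w t (γ t)) (w t y) < η := by
  have hK : IsCompact ((fun t ↦ (t, γ t)) '' s) :=
    hs.image_of_continuousOn (continuousOn_id.prodMk hγ)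
  obtain ⟨δ, hδ, h⟩ := Metric.mem_uniformity_dist.1 <| hK.uniformContinuousAt_of_continuousAt
    (uncurry w) (fun _ _ ↦ hw.continuousAt) (Metric.dist_mem_uniformity hη)
  refine ⟨δ, hδ, fun t ht y hy ↦ ?_⟩
  have hdist : dist (t, γ t) (t, y) < δ := by rwa [dist_prod_same_left]
  exact h hdist (mem_image_of_mem _ ht)

lemma tendstoUniformlyOn_comp_of_isCompact (hw : Continuous (uncurry w)) (hs : IsCompact s)
    (hγ : ContinuousOn γ s) {ι : Type*} {l : Filter ι} {φ : ι → X → Y}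
    (hφ : TendstoUniformlyOn φ γ l s) :
    TendstoUniformlyOn (fun i t ↦ w t (φ i t)) (fun t ↦ w t (γ t)) l s := by
  rw [Metric.tendstoUniformlyOn_iff] at hφ ⊢
  intro η hη
  obtain ⟨δ, hδ, h⟩ := exists_dist_lt_of_dist_lt_of_isCompact hw hs hγ hη
  filter_upwards [hφ δ hδ] with i hi t ht using h t ht _ (hi t ht)

end Compactness

section InitialValue

variable {E : Type*} [NormedAddCommGroup E] [NormedSpace ℝ E] {a b : ℝ}
variable {v : ℝ → E → E} {γ : ℝ → E}

lemma exists_norm_sub_sub_fderiv_le_of_norm_sub_lt (hv : ∀ t, Differentiable ℝ (v t))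
    (hv' : Continuous fun p : ℝ × E ↦ fderiv ℝ (v p.1) p.2) {s : Set ℝ} (hs : IsCompact s)
    (hγ : ContinuousOn γ s) {η : ℝ} (hη : 0 < η) :
    ∃ δ > 0, ∀ t ∈ s, ∀ x, ‖x - γ t‖ < δ →
      ‖v t x - v t (γ t) - fderiv ℝ (v t) (γ t) (x - γ t)‖ ≤ η * ‖x - γ t‖ := by
  obtain ⟨δ, hδ, h⟩ := exists_dist_lt_of_dist_lt_of_isCompact
    (w := fun t x ↦ fderiv ℝ (v t) x) hv' hs hγ hη
  simp only [dist_eq_norm'] at h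
  refine ⟨δ, hδ, fun t ht x hx ↦ ?_⟩
  exact (convex_ball (γ t) δ).norm_image_sub_le_of_norm_hasFDerivWithin_le'
    (fun z _ ↦ (hv t z).hasFDerivAt.hasFDerivWithinAt)
    (fun z hz ↦ (h t ht z (mem_ball_iff_norm.1 hz)).le)
    (Metric.mem_ball_self hδ) (mem_ball_iff_norm.2 hx)

theorem exists_norm_sub_le_mul_norm_sub_of_isIntegralCurveOn (hv : ∀ t, Differentiable ℝ (v t))
    (hv' : Continuous fun p : ℝ × E ↦ fderiv ℝ (v p.1) p.2)
    (hγ : IsIntegralCurveOn γ v (Icc a b)) :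
    ∃ C ≥ 0, ∃ δ > 0, ∀ ψ : ℝ → E, IsIntegralCurveOn ψ v (Icc a b) → ‖ψ a - γ a‖ < δ →
      ∀ t ∈ Icc a b, ‖ψ t - γ t‖ ≤ C * ‖ψ a - γ a‖ := by
  have hA : ContinuousOn (fun t ↦ fderiv ℝ (v t) (γ t)) (Icc a b) :=
    hv'.comp_continuousOn (continuousOn_id.prodMk hγ.continuousOn)
  obtain ⟨M, hM⟩ := isCompact_Icc.exists_bound_of_continuousOn hA
  obtain ⟨δ, hδ, hrem⟩ := exists_norm_sub_sub_fderiv_le_of_norm_sub_lt hv hv' isCompact_Icc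
    hγ.continuousOn one_pos
  set K := max M 0 + 1
  have hK : 0 ≤ K := by positivity
  have hC := Real.exp_pos ((K + 1) * (b - a))
  refine ⟨_, hC.le, δ / Real.exp ((K + 1) * (b - a)), by positivity, fun ψ hψ hψa t ht ↦ ?_⟩
  rw [lt_div_iff₀ hC] at hψa
  rw [mul_comm]
  refine norm_le_mul_exp_of_norm_deriv_le_of_norm_lt (u := fun t ↦ ψ t - γ t) hK
    (fun s hs ↦ (hψ s hs).sub (hγ s hs)) hψa (fun s hs hsδ ↦ ?_) t ht
  replace hs := Ico_subset_Icc_self hs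
  calc ‖v s (ψ s) - v s (γ s)‖
      ≤ ‖v s (ψ s) - v s (γ s) - fderiv ℝ (v s) (γ s) (ψ s - γ s)‖ +
          ‖fderiv ℝ (v s) (γ s) (ψ s - γ s)‖ := norm_le_norm_sub_add _ _
    _ ≤ 1 * ‖ψ s - γ s‖ + max M 0 * ‖ψ s - γ s‖ := add_le_add (hrem s hs _ hsδ)
        ((fderiv ℝ (v s) (γ s)).le_of_opNorm_le ((hM s hs).trans (le_max_left M 0)) _)
    _ = K * ‖ψ s - γ s‖ := by ring

theorem eqOn_of_isIntegralCurveOn (hv : ∀ t, Differentiable ℝ (v t))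
    (hv' : Continuous fun p : ℝ × E ↦ fderiv ℝ (v p.1) p.2) {ψ : ℝ → E}
    (hψ : IsIntegralCurveOn ψ v (Icc a b)) (hγ : IsIntegralCurveOn γ v (Icc a b))
    (hψγ : ψ a = γ a) : EqOn ψ γ (Icc a b) := by
  obtain ⟨C, -, δ, hδ, hC⟩ := exists_norm_sub_le_mul_norm_sub_of_isIntegralCurveOn hv hv' hγ
  intro t ht
  simpa [hψγ, sub_eq_zero] using hC ψ hψ (by simpa [hψγ] using hδ) t ht

lemma norm_sub_sub_fundamentalSolution_le {A U : ℝ → E →L[ℝ] E} {ψ : ℝ → E} {M ε : ℝ}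
    (hγ : IsIntegralCurveOn γ v (Icc a b)) (hψ : IsIntegralCurveOn ψ v (Icc a b))
    (hUa : U a = .id ℝ E) (hU : IsIntegralCurveOn U (fun t W ↦ (A t).comp W) (Icc a b))
    (hM : ∀ t ∈ Icc a b, ‖A t‖ ≤ M)
    (hε : ∀ t ∈ Icc a b, ‖v t (ψ t) - v t (γ t) - A t (ψ t - γ t)‖ ≤ ε) :
    ∀ t ∈ Icc a b,
      ‖ψ t - γ t - U t (ψ a - γ a)‖ ≤ ε * (b - a) * Real.exp (M * (b - a)) := by
  intro t ht
  have hM0 : 0 ≤ M := (norm_nonneg _).trans (hM t ht)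
  have hε0 : 0 ≤ ε := (norm_nonneg _).trans (hε t ht)
  set d := ψ a - γ a
  have hderiv : ∀ s ∈ Icc a b, HasDerivWithinAt (fun s ↦ ψ s - γ s - U s d)
      (v s (ψ s) - v s (γ s) - A s (U s d)) (Icc a b) s := fun s hs ↦
    (((hψ s hs).sub (hγ s hs)).sub
      ((hU s hs).clm_apply (hasDerivWithinAt_const s _ d))).congr_deriv (by simp)
  have hbound : ∀ s ∈ Ico a b,
      ‖v s (ψ s) - v s (γ s) - A s (U s d)‖ ≤ M * ‖ψ s - γ s - U s d‖ + ε := by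
    intro s hs
    replace hs := Ico_subset_Icc_self hs
    calc ‖v s (ψ s) - v s (γ s) - A s (U s d)‖
        = ‖A s (ψ s - γ s - U s d) + (v s (ψ s) - v s (γ s) - A s (ψ s - γ s))‖ := by
          rw [map_sub _ (ψ s - γ s)]
          congr 1
          abel
      _ ≤ M * ‖ψ s - γ s - U s d‖ + ε :=
          norm_add_le_of_le ((A s).le_of_opNorm_le (hM s hs) _) (hε s hs)
  simpa only [zero_add] using
    norm_le_mul_exp_of_norm_deriv_le (δ := 0) hM0 hε0 hderiv (by simp [hUa, d]) hbound t ht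

variable {ι : Type*} {l : Filter ι} {φ : ι → ℝ → E}

theorem tendstoUniformlyOn_of_isIntegralCurveOn (hv : ∀ t, Differentiable ℝ (v t))
    (hv' : Continuous fun p : ℝ × E ↦ fderiv ℝ (v p.1) p.2)
    (hγ : IsIntegralCurveOn γ v (Icc a b)) (hφ : ∀ i, IsIntegralCurveOn (φ i) v (Icc a b))
    (hφa : Tendsto (fun i ↦ φ i a) l (𝓝 (γ a))) : TendstoUniformlyOn φ γ l (Icc a b) := by
  obtain ⟨C, hC, δ, hδ, hφC⟩ := exists_norm_sub_le_mul_norm_sub_of_isIntegralCurveOn hv hv' hγ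
  rw [Metric.tendstoUniformlyOn_iff]
  intro e he
  obtain ⟨ρ, hρ, hCρ⟩ := exists_pos_mul_lt he C
  filter_upwards [Metric.tendsto_nhds.1 hφa _ (lt_min hδ hρ)] with i hi t ht
  rw [dist_eq_norm, lt_min_iff] at hi
  rw [dist_eq_norm']
  calc ‖φ i t - γ t‖ ≤ C * ‖φ i a - γ a‖ := hφC _ (hφ i) hi.1 t ht
    _ ≤ C * ρ := by gcongr; exact hi.2.le
    _ < e := hCρ

theorem isLittleO_sub_sub_fundamentalSolution (hab : a ≤ b) (hv : ∀ t, Differentiable ℝ (v t))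
    (hv' : Continuous fun p : ℝ × E ↦ fderiv ℝ (v p.1) p.2)
    (hγ : IsIntegralCurveOn γ v (Icc a b)) (hφ : ∀ i, IsIntegralCurveOn (φ i) v (Icc a b))
    (hφa : Tendsto (fun i ↦ φ i a) l (𝓝 (γ a))) {U : ℝ → E →L[ℝ] E} (hUa : U a = .id ℝ E)
    (hU : IsIntegralCurveOn U (fun t W ↦ (fderiv ℝ (v t) (γ t)).comp W) (Icc a b)) :
    (fun i ↦ φ i b - γ b - U b (φ i a - γ a)) =o[l] fun i ↦ φ i a - γ a := by
  have hA : ContinuousOn (fun t ↦ fderiv ℝ (v t) (γ t)) (Icc a b) :=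
    hv'.comp_continuousOn (continuousOn_id.prodMk hγ.continuousOn)
  obtain ⟨M, hM⟩ := isCompact_Icc.exists_bound_of_continuousOn hA
  obtain ⟨C, -, δ, hδ, hφC⟩ := exists_norm_sub_le_mul_norm_sub_of_isIntegralCurveOn hv hv' hγ
  rw [Asymptotics.isLittleO_iff]
  intro e he
  obtain ⟨η, hη, hηe⟩ := exists_pos_mul_lt he (C * (b - a) * Real.exp (M * (b - a)))
  obtain ⟨ρ, hρ, hrem⟩ :=
    exists_norm_sub_sub_fderiv_le_of_norm_sub_lt hv hv' isCompact_Icc hγ.continuousOn hη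
  have hunif := Metric.tendstoUniformlyOn_iff.1
    (tendstoUniformlyOn_of_isIntegralCurveOn hv hv' hγ hφ hφa) ρ hρ
  filter_upwards [Metric.tendsto_nhds.1 hφa δ hδ, hunif] with i hiδ hiρ
  simp only [dist_eq_norm] at hiδ
  simp only [dist_eq_norm'] at hiρ
  have hrem' : ∀ t ∈ Icc a b,
      ‖v t (φ i t) - v t (γ t) - fderiv ℝ (v t) (γ t) (φ i t - γ t)‖
        ≤ η * (C * ‖φ i a - γ a‖) := fun t ht ↦
    (hrem t ht _ (hiρ t ht)).trans (by gcongr; exact hφC _ (hφ i) hiδ t ht)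
  calc ‖φ i b - γ b - U b (φ i a - γ a)‖
      ≤ η * (C * ‖φ i a - γ a‖) * (b - a) * Real.exp (M * (b - a)) :=
        norm_sub_sub_fundamentalSolution_le hγ (hφ i) hUa hU hM hrem' b (right_mem_Icc.2 hab)
    _ = C * (b - a) * Real.exp (M * (b - a)) * η * ‖φ i a - γ a‖ := by ring
    _ ≤ e * ‖φ i a - γ a‖ := by gcongr

variable [CompleteSpace E] {P : Type*} [NormedAddCommGroup P] [NormedSpace ℝ P]
  {φ : P → ℝ → E}

theorem contDiff_one_apply_right_of_isIntegralCurveOn (hab : a ≤ b)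
    (hv : ∀ t, Differentiable ℝ (v t)) (hv' : Continuous fun p : ℝ × E ↦ fderiv ℝ (v p.1) p.2)
    (hφ : ∀ p, IsIntegralCurveOn (φ p) v (Icc a b)) (hφa : ContDiff ℝ 1 fun p ↦ φ p a) :
    ContDiff ℝ 1 fun p ↦ φ p b := by
  have hA : ∀ p, ContinuousOn (fun t ↦ fderiv ℝ (v t) (φ p t)) (Icc a b) := fun p ↦
    hv'.comp_continuousOn (continuousOn_id.prodMk (hφ p).continuousOn)
  choose U hUa hU using fun p ↦ exists_fundamentalSolution hab (hA p)
  have hUb : Continuous fun p ↦ U p b := by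
    refine continuous_iff_continuousAt.2 fun p ↦ ?_
    have hcoeff := tendstoUniformlyOn_comp_of_isCompact (w := fun t x ↦ fderiv ℝ (v t) x) hv'
      isCompact_Icc (hφ p).continuousOn <| tendstoUniformlyOn_of_isIntegralCurveOn hv hv' (hφ p) hφ
        hφa.continuous.continuousAt.tendsto
    refine tendsto_of_isIntegralCurveOn_linear (y := U)
      (A := fun q t ↦ ContinuousLinearMap.compL ℝ E E E (fderiv ℝ (v t) (φ q t)))
      ((ContinuousLinearMap.compL ℝ E E E).continuous.comp_continuousOn (hA p))
      ((ContinuousLinearMap.compL ℝ E E E).uniformContinuous.comp_tendstoUniformlyOn hcoeff)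
      hU (hU p) ?_ b (right_mem_Icc.2 hab)
    simp only [hUa, tendsto_const_nhds]
  have hderiv : ∀ p, HasFDerivAt (fun q ↦ φ q b) ((U p b).comp (fderiv ℝ (φ · a) p)) p := by
    intro p
    have hda : HasFDerivAt (φ · a) (fderiv ℝ (φ · a) p) p :=
      (hφa.differentiable one_ne_zero p).hasFDerivAt
    have hrem := (isLittleO_sub_sub_fundamentalSolution hab hv hv' (hφ p) hφ
      hφa.continuous.continuousAt.tendsto (hUa p) (hU p)).trans_isBigO hda.isBigO_sub
    have hlin := ((U p b).isBigO_comp _ _).trans_isLittleO hda.isLittleO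
    refine .of_isLittleO ((hrem.add hlin).congr_left fun q ↦ ?_)
    simp
  exact contDiff_one_iff_hasFDerivAt.2
    ⟨_, hUb.clm_comp (hφa.continuous_fderiv one_ne_zero), hderiv⟩

end InitialValue

section ParametricCalculus

variable {E F H : Type*} [NormedAddCommGroup E] [NormedSpace ℝ E] [NormedAddCommGroup F]
  [NormedSpace ℝ F] [NormedAddCommGroup H] [NormedSpace ℝ H]

lemma differentiable_of_contDiff_uncurry {w : H → E → F} (hw : ContDiff ℝ 1 (uncurry w)) (h : H) :
    Differentiable ℝ (w h) :=
  (hw.comp (contDiff_prodMk_right h)).differentiable one_ne_zero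

lemma continuous_fderiv_of_contDiff_uncurry {w : H → E → F} (hw : ContDiff ℝ 1 (uncurry w)) :
    Continuous fun p : H × E ↦ fderiv ℝ (w p.1) p.2 :=
  (ContDiff.fderiv (f := fun p : H × E ↦ w p.1) (n := 0)
    (hw.comp (f := fun q : (H × E) × E ↦ (q.1.1, q.2)) (by fun_prop)) contDiff_snd
    le_rfl).continuous

variable [CompleteSpace F] [CompleteSpace H]

/- The integral is the value at the final time of the solution of `h' = 0`, `y' = w h t`. -/
theorem contDiff_one_intervalIntegral {w : H → ℝ → F} (hw : ContDiff ℝ 1 (uncurry w)) {a b : ℝ}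
    (hab : a ≤ b) : ContDiff ℝ 1 fun h ↦ ∫ t in a..b, w h t := by
  let v : ℝ → H × F → H × F := fun t z ↦ (0, w z.1 t)
  have hv : ContDiff ℝ 1 (uncurry v) :=
    contDiff_const.prodMk (hw.comp (g := uncurry w) (f := fun p : ℝ × H × F ↦ (p.2.1, p.1))
      (by fun_prop))
  have hcurve : ∀ h, IsIntegralCurveOn (fun t ↦ (h, ∫ s in a..t, w h s)) v (Icc a b) := by
    intro h t _
    have hwc : Continuous (w h) := hw.continuous.uncurry_left h
    exact ((hasDerivAt_const t h).prodMk
      (hwc.integral_hasStrictDerivAt a t).hasDerivAt).hasDerivWithinAt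
  have hinit : ContDiff ℝ 1 fun h : H ↦ (h, ∫ s in a..a, w h s) := by
    simpa using contDiff_prodMk_left (0 : F)
  exact (contDiff_one_apply_right_of_isIntegralCurveOn hab
    (differentiable_of_contDiff_uncurry hv) (continuous_fderiv_of_contDiff_uncurry hv) hcurve
    hinit).snd

lemma dslope_eq_integral_deriv {u : ℝ → F} (hu : ContDiff ℝ 1 u) (a b : ℝ) :
    dslope u a b = ∫ s in (0 : ℝ)..1, deriv u (a + s * (b - a)) := by
  rcases eq_or_ne b a with rfl | hba
  · simp
  have hcont := (hu.continuous_deriv le_rfl).comp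
    (by fun_prop : Continuous fun s : ℝ ↦ a + s • (b - a))
  have hint := intervalIntegral.integral_unitInterval_deriv_eq_sub hcont.continuousOn
    fun s _ ↦ (hu.differentiable one_ne_zero (a + s • (b - a))).hasDerivAt
  rw [add_sub_cancel] at hint
  rw [dslope_of_ne _ hba, slope_def_module, ← hint, inv_smul_smul₀ (sub_ne_zero.2 hba)]
  simp only [smul_eq_mul]

theorem contDiff_one_dslope {w : H → ℝ → F} (hw : ContDiff ℝ 2 (uncurry w)) :
    ContDiff ℝ 1 fun p : H × ℝ × ℝ ↦ dslope (w p.1) p.2.1 p.2.2 := by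
  have hderiv : ContDiff ℝ 1 fun p : (H × ℝ × ℝ) × ℝ ↦
      deriv (w p.1.1) (p.1.2.1 + p.2 * (p.1.2.2 - p.1.2.1)) :=
    (ContDiff.fderiv (f := fun p : (H × ℝ × ℝ) × ℝ ↦ w p.1.1)
      (hw.comp (f := fun q : ((H × ℝ × ℝ) × ℝ) × ℝ ↦ (q.1.1.1, q.2)) (by fun_prop))
      (by fun_prop) one_add_one_eq_two.le).clm_apply contDiff_const
  have hw1 : ∀ h, ContDiff ℝ 1 (w h) := fun h ↦
    (hw.of_le one_le_two).comp (contDiff_prodMk_right h)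
  simp only [dslope_eq_integral_deriv (hw1 _)]
  exact contDiff_one_intervalIntegral hderiv zero_le_one

end ParametricCalculus

section PerturbedFlow

variable {E : Type*} [NormedAddCommGroup E] [NormedSpace ℝ E] {f : E → E} {g : ℝ → E → ℝ → E}

lemma dslope_line_zero {x : E} (hf : DifferentiableAt ℝ f x) (y : E) :
    dslope (fun s : ℝ ↦ f (x + s • y)) 0 0 = fderiv ℝ f x y := by
  rw [dslope_same]
  exact hf.lineDeriv_eq_fderiv

lemma dslope_line_of_ne (x y : E) {ε : ℝ} (hε : ε ≠ 0) :
    dslope (fun s : ℝ ↦ f (x + s • y)) 0 ε = ε⁻¹ • (f (x + ε • y) - f x) := by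
  simp [dslope_of_ne _ hε, slope_def_module]

/-- The vector field governing the triples `(x, y, ε)` in which `x` solves `ẋ = f(x)` and
`y = (x_ε - x) / ε` is the rescaled deviation from `x` of a solution `x_ε` of the equation
`ẋ = f(x) + ε g(t, x, ε)`. The difference quotient `(f(x + ε y) - f(x)) / ε` occurring in `ẏ` is
written with `dslope`, which gives it the value `f'(x) y` at `ε = 0`. -/
noncomputable def rescaledField (f : E → E) (g : ℝ → E → ℝ → E) (t : ℝ) (z : E × E × ℝ) :
    E × E × ℝ :=
  (f z.1, dslope (fun s : ℝ ↦ f (z.1 + s • z.2.1)) 0 z.2.2 + g t (z.1 + z.2.2 • z.2.1) z.2.2, 0)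

lemma contDiff_one_rescaledField [CompleteSpace E] (hf : ContDiff ℝ 2 f)
    (hg : ContDiff ℝ 1 fun p : ℝ × E × ℝ ↦ g p.1 p.2.1 p.2.2) :
    ContDiff ℝ 1 (uncurry (rescaledField f g)) := by
  have hslope : ContDiff ℝ 1 fun p : (E × E) × ℝ × ℝ ↦
      dslope (fun s ↦ f (p.1.1 + s • p.1.2)) p.2.1 p.2.2 :=
    contDiff_one_dslope (w := fun (q : E × E) s ↦ f (q.1 + s • q.2)) (hf.comp (by fun_prop))
  have hf1 : ContDiff ℝ 1 f := hf.of_le one_le_two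
  refine (hf1.comp (by fun_prop)).prodMk ((ContDiff.add ?_ ?_).prodMk contDiff_const)
  · exact hslope.comp (f := fun p : ℝ × E × E × ℝ ↦ ((p.2.1, p.2.2.1), (0 : ℝ), p.2.2.2))
      (by fun_prop)
  · exact hg.comp (f := fun p : ℝ × E × E × ℝ ↦ (p.1, p.2.1 + p.2.2.2 • p.2.2.1, p.2.2.2))
      (by fun_prop)

variable {x y : ℝ → E} {s : Set ℝ}

lemma isIntegralCurveOn_rescaledField_zero (hf : Differentiable ℝ f)
    (hx : IsIntegralCurveOn x (fun _ ↦ f) s)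
    (hy : IsIntegralCurveOn y (fun t z ↦ fderiv ℝ f (x t) z + g t (x t) 0) s) :
    IsIntegralCurveOn (fun t ↦ (x t, y t, 0)) (rescaledField f g) s := fun t ht ↦
  ((hx t ht).prodMk ((hy t ht).prodMk (hasDerivWithinAt_const t s 0))).congr_deriv <| by
    simp only [rescaledField, dslope_line_zero (hf _), zero_smul, add_zero]

lemma isIntegralCurveOn_rescaledField_of_ne {ε : ℝ} (hε : ε ≠ 0)
    (hx : IsIntegralCurveOn x (fun _ ↦ f) s)
    (hy : IsIntegralCurveOn y (fun t z ↦ f z + ε • g t z ε) s) :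
    IsIntegralCurveOn (fun t ↦ (x t, ε⁻¹ • (y t - x t), ε)) (rescaledField f g) s := fun t ht ↦
  ((hx t ht).prodMk ((((hy t ht).sub (hx t ht)).const_smul ε⁻¹).prodMk
    (hasDerivWithinAt_const t s ε))).congr_deriv <| by
    simp [rescaledField, dslope_line_of_ne _ _ hε, smul_inv_smul₀ hε, inv_smul_smul₀ hε,
      ← sub_add_eq_add_sub]

variable [CompleteSpace E] {a b : ℝ} {X : ℝ → E → ℝ → E}

theorem exists_contDiff_one_rescaledDeviation (hab : a ≤ b) (hf : ContDiff ℝ 2 f)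
    (hg : ContDiff ℝ 1 fun p : ℝ × E × ℝ ↦ g p.1 p.2.1 p.2.2) (hXa : ∀ v ε, X a v ε = v)
    (hX : ∀ v ε, IsIntegralCurveOn (X · v ε) (fun t x ↦ f x + ε • g t x ε) (Icc a b)) :
    ∃ Y : ℝ → E → ℝ → E, (∀ t v ε, ε ≠ 0 → Y t v ε = ε⁻¹ • (X t v ε - X t v 0)) ∧
      (∀ v, Y a v 0 = 0) ∧
      (∀ v, IsIntegralCurveOn (Y · v 0)
        (fun t y ↦ fderiv ℝ f (X t v 0) y + g t (X t v 0) 0) (Icc a b)) ∧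
      ContDiff ℝ 1 fun p : E × ℝ ↦ Y b p.1 p.2 := by
  have hx : ∀ v, IsIntegralCurveOn (X · v 0) (fun _ ↦ f) (Icc a b) := fun v ↦ by
    simpa using hX v 0
  have hfd : Continuous (fderiv ℝ f) := hf.continuous_fderiv two_ne_zero
  have hlin : ∀ v, ∃ y : ℝ → E, y a = 0 ∧ IsIntegralCurveOn y
      (fun t z ↦ fderiv ℝ f (X t v 0) z + g t (X t v 0) 0) (Icc a b) := fun v ↦
    exists_isIntegralCurveOn_affine hab (hfd.comp_continuousOn (hx v).continuousOn)
      (hg.continuous.comp_continuousOn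
        (continuousOn_id.prodMk ((hx v).continuousOn.prodMk continuousOn_const))) 0
  choose y hya hy using hlin
  let Y : ℝ → E → ℝ → E := fun t v ε ↦ if ε = 0 then y v t else ε⁻¹ • (X t v ε - X t v 0)
  have hY0 : ∀ v, (Y · v 0) = y v := fun v ↦ by simp [Y]
  have hYne : ∀ t v ε, ε ≠ 0 → Y t v ε = ε⁻¹ • (X t v ε - X t v 0) := fun t v ε hε ↦ if_neg hε
  have hcurve : ∀ p : E × ℝ, IsIntegralCurveOn (fun t ↦ (X t p.1 0, Y t p.1 p.2, p.2))
      (rescaledField f g) (Icc a b) := by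
    rintro ⟨v, ε⟩
    rcases eq_or_ne ε 0 with rfl | hε
    · simpa [Y] using isIntegralCurveOn_rescaledField_zero (hf.differentiable two_ne_zero) (hx v)
        (hy v)
    · simpa only [hYne _ v ε hε] using isIntegralCurveOn_rescaledField_of_ne hε (hx v) (hX v ε)
  have hinit : ContDiff ℝ 1 fun p : E × ℝ ↦ (X a p.1 0, Y a p.1 p.2, p.2) := by
    have hYa : ∀ v ε, Y a v ε = 0 := fun v ε ↦ by simp [Y, hya, hXa]
    simp only [hXa, hYa]
    fun_prop
  have hfield := contDiff_one_rescaledField hf hg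
  refine ⟨Y, hYne, fun v ↦ (congrFun (hY0 v) a).trans (hya v), fun v ↦ (hY0 v).symm ▸ hy v, ?_⟩
  exact (contDiff_one_apply_right_of_isIntegralCurveOn hab
    (differentiable_of_contDiff_uncurry hfield) (continuous_fderiv_of_contDiff_uncurry hfield)
    hcurve hinit).snd.fst

end PerturbedFlow

section Adjoint

variable {E : Type*} [NormedAddCommGroup E] [InnerProductSpace ℝ E] [CompleteSpace E]

theorem integral_inner_eq_sub_of_isIntegralCurveOn_adjoint {a b : ℝ} (hab : a ≤ b)
    {A : ℝ → E →L[ℝ] E} {c y z : ℝ → E} (hc : ContinuousOn c (Icc a b))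
    (hy : IsIntegralCurveOn y (fun t x ↦ A t x + c t) (Icc a b))
    (hz : IsIntegralCurveOn z (fun t x ↦ -(ContinuousLinearMap.adjoint (A t) x)) (Icc a b)) :
    ∫ t in a..b, ⟪c t, z t⟫_ℝ = ⟪y b, z b⟫_ℝ - ⟪y a, z a⟫_ℝ := by
  have hderiv : ∀ t ∈ Icc a b,
      HasDerivWithinAt (fun t ↦ ⟪y t, z t⟫_ℝ) ⟪c t, z t⟫_ℝ (Icc a b) t := fun t ht ↦
    ((hy t ht).inner ℝ (hz t ht)).congr_deriv <| by
      rw [inner_neg_right, ContinuousLinearMap.adjoint_inner_right, inner_add_left]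
      ring
  exact intervalIntegral.integral_eq_sub_of_hasDerivAt_of_le hab
    (fun t ht ↦ (hderiv t ht).continuousWithinAt)
    (fun t ht ↦ (hderiv t (Ioo_subset_Icc_self ht)).hasDerivAt (Icc_mem_nhds ht.1 ht.2))
    ((hc.inner hz.continuousOn).intervalIntegrable_of_Icc hab)

theorem stmt_7_general {T : ℝ} (hT : 0 ≤ T) {f : E → E} (hf : ContDiff ℝ 2 f) {g : ℝ → E → ℝ → E}
    (hg : ContDiff ℝ 1 fun p : ℝ × E × ℝ ↦ g p.1 p.2.1 p.2.2) {X : ℝ → E → ℝ → E}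
    (hX0 : ∀ v ε, X 0 v ε = v)
    (hX : ∀ v ε, IsIntegralCurveOn (X · v ε) (fun t x ↦ f x + ε • g t x ε) (Icc 0 T))
    {x₀ z₀ : ℝ → E} (hx₀ : IsIntegralCurve x₀ fun _ ↦ f)
    (hz₀ : IsIntegralCurve z₀ fun t z ↦ -(ContinuousLinearMap.adjoint (fderiv ℝ f (x₀ t)) z)) :
    ∃ Q : E → ℝ → E, (∀ v, ∀ ε ≠ 0, Q v ε = ε⁻¹ • (X T v ε - X T v 0)) ∧
      (∀ v, Tendsto (fun ε : ℝ ↦ ε⁻¹ • (X T v ε - X T v 0)) (𝓝[≠] 0) (𝓝 (Q v 0))) ∧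
      ContDiff ℝ 1 (fun p : E × ℝ ↦ Q p.1 p.2) ∧
      ∀ θ, ∫ t in 0..T, ⟪g t (x₀ (t + θ)) 0, z₀ (t + θ)⟫_ℝ = ⟪Q (x₀ θ) 0, z₀ (T + θ)⟫_ℝ := by
  obtain ⟨Y, hYne, hY0, hY, hYT⟩ := exists_contDiff_one_rescaledDeviation hT hf hg hX0 hX
  refine ⟨Y T, hYne T, fun v ↦ ?_, hYT, fun θ ↦ ?_⟩
  · have hcont : Continuous (Y T v) := hYT.continuous.comp (.prodMk_right v)
    refine ((hcont.tendsto 0).mono_left nhdsWithin_le_nhds).congr' ?_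
    filter_upwards [self_mem_nhdsWithin] with ε hε using hYne T v ε hε
  · have hX_eq : ∀ t ∈ Icc 0 T, X t (x₀ θ) 0 = x₀ (t + θ) :=
      eqOn_of_isIntegralCurveOn (v := fun _ ↦ f) (fun _ ↦ hf.differentiable two_ne_zero)
        ((hf.continuous_fderiv two_ne_zero).comp continuous_snd) (by simpa using hX (x₀ θ) 0)
        (fun t _ ↦ ((hx₀ (t + θ)).comp_add_const t θ).hasDerivWithinAt)
        ((hX0 _ _).trans (by rw [zero_add]))
    have hy : IsIntegralCurveOn (Y · (x₀ θ) 0)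
        (fun t y ↦ fderiv ℝ f (x₀ (t + θ)) y + g t (x₀ (t + θ)) 0) (Icc 0 T) := fun t ht ↦
      by simpa only [hX_eq t ht] using hY (x₀ θ) t ht
    have hc : Continuous fun t ↦ g t (x₀ (t + θ)) 0 :=
      hg.continuous.comp (f := fun t ↦ (t, x₀ (t + θ), (0 : ℝ)))
        (by have := hx₀.continuous; fun_prop)
    rw [integral_inner_eq_sub_of_isIntegralCurveOn_adjoint hT hc.continuousOn hy
      (fun t _ ↦ ((hz₀ (t + θ)).comp_add_const t θ).hasDerivWithinAt), hY0, inner_zero_left,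
      sub_zero]

end Adjoint

/-- Lemma 2: for the Poincaré map `𝒫_ε(v) = x(T,v,ε)` of
`ẋ = f(x) + εg(t,x,ε)` with `Q(v,ε) = (𝒫_ε(v) − 𝒫₀(v))/ε`, the limit `Q(v,0)` as
`ε → 0⁺` exists, the resulting `Q` is `C¹` on `ℝⁿ × [0,1]`, and the Malkin bifurcation
function `M(θ) = ∫₀ᵀ ⟨g(t,x₀(t+θ),0), z₀(t+θ)⟩ dt` satisfies
`M(θ) = ⟨Q(x₀(θ),0), z₀(θ)⟩`. -/
theorem stmt_7 {n : ℕ} (T : ℝ) (hT : 0 < T)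
    (f : EuclideanSpace ℝ (Fin n) → EuclideanSpace ℝ (Fin n))
    (hf : ContDiff ℝ 2 f)
    (g : ℝ → EuclideanSpace ℝ (Fin n) → ℝ → EuclideanSpace ℝ (Fin n))
    (hg : ContDiff ℝ 1 fun p : ℝ × EuclideanSpace ℝ (Fin n) × ℝ => g p.1 p.2.1 p.2.2)
    (hgT : ∀ t x e, g (t + T) x e = g t x e)
    -- the (unique, globally defined) solutions `X(·, v, ε)` of the Cauchy problems
    (X : ℝ → EuclideanSpace ℝ (Fin n) → ℝ → EuclideanSpace ℝ (Fin n))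
    (hX0 : ∀ v ε, X 0 v ε = v)
    (hXode : ∀ v ε t, HasDerivAt (fun s => X s v ε)
      (f (X t v ε) + ε • g t (X t v ε) ε) t)
    (hXuniq : ∀ v ε (u : ℝ → EuclideanSpace ℝ (Fin n)), u 0 = v →
      (∀ t, HasDerivAt u (f (u t) + ε • g t (u t) ε) t) → ∀ t, u t = X t v ε)
    -- the `T`-periodic limit cycle `x₀` of `ẋ = f(x)`
    (x₀ : ℝ → EuclideanSpace ℝ (Fin n))
    (hx₀ : ∀ t, HasDerivAt x₀ (f (x₀ t)) t)
    (hx₀T : ∀ t, x₀ (t + T) = x₀ t)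
    -- the `T`-periodic solution `z₀` of the adjoint system `ż = −(f'(x₀(t)))*z`
    (z₀ : ℝ → EuclideanSpace ℝ (Fin n))
    (hz₀ : ∀ t, HasDerivAt z₀ (-(ContinuousLinearMap.adjoint (fderiv ℝ f (x₀ t)) (z₀ t))) t)
    (hz₀T : ∀ t, z₀ (t + T) = z₀ t) :
    ∃ Q : EuclideanSpace ℝ (Fin n) → ℝ → EuclideanSpace ℝ (Fin n),
      (∀ v, ∀ ε ∈ Ioc (0:ℝ) 1, Q v ε = ε⁻¹ • (X T v ε - X T v 0)) ∧
      (∀ v, Tendsto (fun ε : ℝ => ε⁻¹ • (X T v ε - X T v 0)) (𝓝[>] (0:ℝ)) (𝓝 (Q v 0))) ∧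
      ContDiffOn ℝ 1 (fun p : EuclideanSpace ℝ (Fin n) × ℝ => Q p.1 p.2)
        (univ ×ˢ Icc (0:ℝ) 1) ∧
      ∀ θ ∈ Icc (0:ℝ) T,
        (∫ t in (0:ℝ)..T, ⟪g t (x₀ (t + θ)) 0, z₀ (t + θ)⟫_ℝ) = ⟪Q (x₀ θ) 0, z₀ θ⟫_ℝ := by
  obtain ⟨Q, hQ, hlim, hQ1, hM⟩ := stmt_7_general hT.le hf hg hX0
    (fun v ε t _ ↦ (hXode v ε t).hasDerivWithinAt) hx₀ hz₀
  exact ⟨Q, fun v ε hε ↦ hQ v ε hε.1.ne', fun v ↦ (hlim v).mono_left (nhdsGT_le_nhdsNE 0),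
    hQ1.contDiffOn, fun θ _ ↦ by rw [hM, add_comm T, hz₀T]⟩
end
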